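/- arXiv:2103.04457 — 2 statements merged into one kernel-verified Lean document; each statement's English description precedes it below -/
import Mathlib

section
/- Let m ≥ 2 be an integer and let the cyclic group ZMod m act on ℂ by k • z = exp(2πik/m)·z (a faithful action by rotations), act on ℂ × ℝ via this action on ℂ and trivially on ℝ, and act on the one-point compactifications OnePoint ℂ and OnePoint (ℂ × ℝ) by the induced actions fixing ∞ (based at ∞). Then the space Map^{ZMod m}_*(OnePoint ℂ, OnePoint (ℂ × ℝ)) of equivariant basepoint-preserving continuous maps is homotopy equivalent to Map_*(S¹, S³) × OnePoint ℝ × Map_*(S², S³), i.e. to Ω S³ × S¹ × Ω² S³. -/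
/-!
STATEMENT 2: For `m ≥ 2`, with `ZMod m` acting on `ℂ` by rotations
`k • z = exp(2πik/m)·z`, the space of equivariant based maps
`Map^{ZMod m}_*(OnePoint ℂ, OnePoint (ℂ × ℝ))` is homotopy equivalent to
`Ω S³ × S¹ × Ω² S³`.
-/

noncomputable section

/-- The rotation action of `k : ZMod m` on `ℂ`, `z ↦ exp(2πik/m)·z`. -/
def rotAct (m : ℕ) (k : ZMod m) (z : ℂ) : ℂ :=
  Complex.exp (2 * Real.pi * Complex.I * (k.val : ℂ) / (m : ℂ)) * z

/-- `Map_*(S^k, S^l)`: based maps between one-point compactifications of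
Euclidean spaces, based at `∞`. -/
abbrev BasedSphereMaps (k l : ℕ) : Type :=
  {f : C(OnePoint (EuclideanSpace ℝ (Fin k)), OnePoint (EuclideanSpace ℝ (Fin l))) //
    f OnePoint.infty = OnePoint.infty}

namespace OnePoint

open Topology Filter Set

section Descend

variable {A B T Y : Type*} [TopologicalSpace A] [TopologicalSpace B] [TopologicalSpace T]
  [TopologicalSpace Y]

/-- A jointly continuous family of maps that is constant on the fibres of `q : A → B` descends to
a continuous family of maps on `B`, as soon as a compact subset of `A` surjects onto `B`. -/
theorem exists_descend [T2Space B] {q : A → B} (hq : Continuous q) {K : Set A} (hK : IsCompact K)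
    (hqK : ∀ b, ∃ a ∈ K, q a = b) {F : T → A → Y} (hF : Continuous fun p : T × A => F p.1 p.2)
    (hfib : ∀ t a a', q a = q a' → F t a = F t a') :
    ∃ G : T → C(B, Y), Continuous G ∧ ∀ t a, G t (q a) = F t a := by
  choose s hsK hs using hqK
  have : CompactSpace K := isCompact_iff_compactSpace.1 hK
  have hprop : IsProperMap fun a : K => q a := (hq.comp continuous_subtype_val).isProperMap
  have hprod : IsProperMap (Prod.map (id : T → T) fun a : K => q a) :=
    (isProperMap_id).prodMap hprop
  have hquot : IsQuotientMap (Prod.map (id : T → T) fun a : K => q a) := by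
    refine hprod.isClosedMap.isQuotientMap hprod.continuous ?_
    rintro ⟨t, b⟩
    exact ⟨(t, ⟨s b, hsK b⟩), by simp [hs]⟩
  have hcont : Continuous fun p : T × B => F p.1 (s p.2) := by
    rw [hquot.continuous_iff]
    have : ((fun p : T × B => F p.1 (s p.2)) ∘ Prod.map (id : T → T) fun a : K => q a)
        = fun p : T × K => F p.1 p.2 := by
      funext p
      exact hfib _ _ _ (hs _)
    rw [this]
    exact hF.comp (by fun_prop : Continuous fun p : T × K => (p.1, (p.2 : A)))
  exact ⟨_, (ContinuousMap.curry ⟨_, hcont⟩).continuous, fun t a => hfib _ _ _ (hs _)⟩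

end Descend

section Collapse

variable {A W : Type*} {j : W → A}

open Classical in
/-- The Pontryagin–Thom collapse `A → OnePoint W` along an injection `j : W → A`. -/
def collapse (j : W → A) (a : A) : OnePoint W :=
  if h : a ∈ range j then (h.choose : W) else ∞

theorem collapse_apply (hj : Function.Injective j) (w : W) : collapse j (j w) = w := by
  have h : j w ∈ range j := ⟨w, rfl⟩
  rw [collapse, dif_pos h, hj h.choose_spec]

theorem collapse_of_notMem {a : A} (h : a ∉ range j) : collapse j a = ∞ := by
  rw [collapse, dif_neg h]

theorem collapse_eq_coe_iff (hj : Function.Injective j) {a : A} {w : W} :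
    collapse j a = w ↔ a = j w := by
  refine ⟨fun h => ?_, fun h => h ▸ collapse_apply hj w⟩
  by_cases ha : a ∈ range j
  · obtain ⟨v, rfl⟩ := ha
    rw [collapse_apply hj, coe_eq_coe] at h
    rw [h]
  · rw [collapse_of_notMem ha] at h
    exact absurd h (infty_ne_coe w)

theorem collapse_eq_infty_iff (hj : Function.Injective j) {a : A} :
    collapse j a = ∞ ↔ a ∉ range j := by
  refine ⟨?_, collapse_of_notMem⟩
  rintro h ⟨v, rfl⟩
  rw [collapse_apply hj] at h
  exact absurd h (coe_ne_infty v)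

theorem continuous_collapse [TopologicalSpace A] [TopologicalSpace W] [T2Space A]
    (hj : IsOpenEmbedding j) : Continuous (collapse j) := by
  rw [continuous_def]
  intro s hs
  by_cases h : ∞ ∈ s
  · have : (collapse j ⁻¹' s)ᶜ = j '' ((↑) ⁻¹' s : Set W)ᶜ := by
      ext a
      by_cases ha : a ∈ range j
      · obtain ⟨w, rfl⟩ := ha
        simp [collapse_apply hj.injective, hj.injective.eq_iff]
      · have : ∀ w, j w ≠ a := fun w hw => ha ⟨w, hw⟩
        simp [collapse_of_notMem ha, h, this]
    rw [← isClosed_compl_iff, this]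
    exact (((isOpen_iff_of_mem h).1 hs).2.image hj.continuous).isClosed
  · have : collapse j ⁻¹' s = j '' ((↑) ⁻¹' s : Set W) := by
      ext a
      by_cases ha : a ∈ range j
      · obtain ⟨w, rfl⟩ := ha
        simp [collapse_apply hj.injective, hj.injective.eq_iff]
      · have : ∀ w, j w ≠ a := fun w hw => ha ⟨w, hw⟩
        simp [collapse_of_notMem ha, h, this]
    rw [this]
    exact hj.isOpenMap _ ((isOpen_iff_of_notMem h).1 hs)

theorem collapse_eq_collapse (hj : Function.Injective j) {a a' : A}
    (h : collapse j a = collapse j a') : a = a' ∨ (a ∉ range j ∧ a' ∉ range j) := by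
  by_cases ha : a ∈ range j
  · obtain ⟨w, rfl⟩ := ha
    rw [collapse_apply hj, eq_comm, collapse_eq_coe_iff hj] at h
    exact Or.inl h.symm
  · rw [collapse_of_notMem ha, eq_comm, collapse_eq_infty_iff hj] at h
    exact Or.inr ⟨ha, h⟩

theorem collapse_surjective (hj : Function.Injective j) {a : A} (ha : a ∉ range j)
    (x : OnePoint W) : ∃ a, collapse j a = x := by
  induction x using OnePoint.rec with
  | infty => exact ⟨a, collapse_of_notMem ha⟩
  | coe w => exact ⟨j w, collapse_apply hj w⟩

end Collapse

section Normed

variable {V W : Type*} [NormedAddCommGroup V] [NormedAddCommGroup W]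

theorem tendsto_nhds_infty_of_norm {α : Type*} {l : Filter α} {g : α → OnePoint V}
    (h : ∀ M : ℝ, ∀ᶠ x in l, ∀ v : V, g x = v → M < ‖v‖) : Tendsto g l (𝓝 ∞) := by
  rw [hasBasis_nhds_infty.tendsto_right_iff]
  rintro K ⟨-, hK⟩
  obtain ⟨M, hM⟩ := hK.isBounded.exists_norm_le
  filter_upwards [h M] with x hx
  rcases hgx : g x with _ | v
  · exact Or.inr rfl
  · exact Or.inl ⟨v, fun hv => (hM v hv).not_gt (hx v hgx), rfl⟩

theorem eventually_nhds_infty_norm [ProperSpace V] (M : ℝ) :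
    ∀ᶠ x : OnePoint V in 𝓝 ∞, ∀ v : V, x = v → M < ‖v‖ := by
  refine hasBasis_nhds_infty.mem_iff.2 ⟨Metric.closedBall 0 M,
    ⟨Metric.isClosed_closedBall, isCompact_closedBall _ _⟩, ?_⟩
  rintro x (⟨w, hw, rfl⟩ | rfl) v hv
  · rw [coe_eq_coe] at hv
    simpa [← hv] using hw
  · exact absurd hv (infty_ne_coe v)

theorem continuous_map_of_norm_eq [ProperSpace V] {T : Type*} [TopologicalSpace T] {a : T → V → V}
    (ha : Continuous fun p : T × V => a p.1 p.2) (hn : ∀ t v, ‖a t v‖ = ‖v‖) :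
    Continuous fun p : T × OnePoint V => OnePoint.map (a p.1) p.2 := by
  rw [continuous_iff_continuousAt]
  rintro ⟨t, x⟩
  induction x using OnePoint.rec with
  | infty =>
    refine tendsto_nhds_infty_of_norm fun M => ?_
    filter_upwards [continuous_snd.continuousAt.eventually
      (eventually_nhds_infty_norm (V := V) M)] with p hp v hv
    obtain ⟨s, y⟩ := p
    induction y using OnePoint.rec with
    | infty => exact absurd hv (infty_ne_coe v)
    | coe w =>
      rw [map_some, coe_eq_coe] at hv
      rw [← hv, hn]
      exact hp w rfl
  | coe v =>
    have he : IsOpenEmbedding (Prod.map id (↑) : T × V → T × OnePoint V) :=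
      IsOpenEmbedding.id.prodMap isOpenEmbedding_coe
    exact (he.continuousAt_iff (x := (t, v))).1 (continuous_coe.comp ha).continuousAt

/-- The canonical map from the product of one-point compactifications to the one-point
compactification of the product. -/
def smash {X Y : Type*} : OnePoint X → OnePoint Y → OnePoint (X × Y)
  | (x : X), (y : Y) => ((x, y) : X × Y)
  | ∞, _ => ∞
  | (_ : X), ∞ => ∞

theorem smash_coe {X Y : Type*} (x : X) (y : Y) :
    smash (x : OnePoint X) (y : OnePoint Y) = ((x, y) : X × Y) := rfl

theorem smash_infty_left {X Y : Type*} (y : OnePoint Y) : smash (∞ : OnePoint X) y = ∞ := by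
  induction y using OnePoint.rec <;> rfl

theorem smash_infty_right {X Y : Type*} (x : OnePoint X) : smash x (∞ : OnePoint Y) = ∞ := by
  induction x using OnePoint.rec <;> rfl

theorem smash_eq_coe {X Y : Type*} {x : OnePoint X} {y : OnePoint Y} {p : X × Y}
    (h : smash x y = p) : x = p.1 ∧ y = p.2 := by
  induction x using OnePoint.rec with
  | infty => rw [smash_infty_left] at h; exact absurd h (infty_ne_coe p)
  | coe x =>
    induction y using OnePoint.rec with
    | infty => exact absurd h (infty_ne_coe p)
    | coe y =>
      rw [smash_coe, coe_eq_coe] at h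
      simp [← h]

theorem continuous_smash [ProperSpace V] [ProperSpace W] :
    Continuous fun p : OnePoint V × OnePoint W => smash p.1 p.2 := by
  rw [continuous_iff_continuousAt]
  rintro ⟨x, y⟩
  by_cases h : x = ∞ ∨ y = ∞
  · have : smash x y = ∞ := by
      rcases h with rfl | rfl
      exacts [smash_infty_left _, smash_infty_right _]
    simp only [ContinuousAt, this]
    refine tendsto_nhds_infty_of_norm fun M => ?_
    rcases h with rfl | rfl
    · filter_upwards [continuous_fst.continuousAt.eventually
        (eventually_nhds_infty_norm (V := V) M)] with p hp v hv
      exact (hp _ (smash_eq_coe hv).1).trans_le (le_max_left _ _)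
    · filter_upwards [continuous_snd.continuousAt.eventually
        (eventually_nhds_infty_norm (V := W) M)] with p hp v hv
      exact (hp _ (smash_eq_coe hv).2).trans_le (le_max_right _ _)
  · push Not at h
    obtain ⟨x, rfl⟩ := ne_infty_iff_exists.1 h.1
    obtain ⟨y, rfl⟩ := ne_infty_iff_exists.1 h.2
    have he : IsOpenEmbedding (Prod.map (↑) (↑) : V × W → OnePoint V × OnePoint W) :=
      isOpenEmbedding_coe.prodMap isOpenEmbedding_coe
    exact (he.continuousAt_iff (x := (x, y))).1 (continuous_coe (X := V × W)).continuousAt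

end Normed

end OnePoint

namespace RotationSphere

open OnePoint Topology Filter Set
open scoped Real

/-- The radial path `[0, ∞] → OnePoint ℂ` from `0` to `∞` along the positive real axis. -/
def ray (r : ENNReal) : OnePoint ℂ := if r = ⊤ then ∞ else ((r.toReal : ℂ) : OnePoint ℂ)

/-- The radius function `OnePoint ℂ → [0, ∞]`. -/
def radius (x : OnePoint ℂ) : ENNReal := x.elim ⊤ fun z => ENNReal.ofReal ‖z‖

/-- Rotation of `OnePoint ℂ` by the angle `θ`. -/
def rot (θ : ℝ) : OnePoint ℂ → OnePoint ℂ :=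
  OnePoint.map fun z => Complex.exp (θ * Complex.I) * z

/-- Rotation of `OnePoint (ℂ × ℝ)` by the angle `θ` in the complex coordinate. -/
def rotProd (θ : ℝ) : OnePoint (ℂ × ℝ) → OnePoint (ℂ × ℝ) :=
  OnePoint.map fun p => (Complex.exp (θ * Complex.I) * p.1, p.2)

theorem norm_exp_mul_I_mul (θ : ℝ) (z : ℂ) : ‖Complex.exp (θ * Complex.I) * z‖ = ‖z‖ := by
  rw [norm_mul, Complex.norm_exp_ofReal_mul_I, one_mul]

theorem continuous_rot : Continuous fun p : ℝ × OnePoint ℂ => rot p.1 p.2 :=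
  continuous_map_of_norm_eq (a := fun (θ : ℝ) (z : ℂ) => Complex.exp (θ * Complex.I) * z)
    (by fun_prop) norm_exp_mul_I_mul

theorem continuous_rotProd : Continuous fun p : ℝ × OnePoint (ℂ × ℝ) => rotProd p.1 p.2 :=
  continuous_map_of_norm_eq
    (a := fun (θ : ℝ) (p : ℂ × ℝ) => (Complex.exp (θ * Complex.I) * p.1, p.2))
    (by fun_prop) fun θ p => by simp [Prod.norm_def]

theorem ray_top : ray ⊤ = ∞ := if_pos rfl

theorem ray_of_ne_top {r : ENNReal} (h : r ≠ ⊤) : ray r = ((r.toReal : ℂ) : OnePoint ℂ) := if_neg h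

theorem ray_zero : ray 0 = ((0 : ℂ) : OnePoint ℂ) := by simp [ray]

theorem ray_ofReal {t : ℝ} (ht : 0 ≤ t) :
    ray (ENNReal.ofReal t) = ((t : ℂ) : OnePoint ℂ) := by
  simp [ray, ht]

theorem continuous_ray : Continuous ray := by
  rw [continuous_iff_continuousAt]
  intro r
  by_cases hr : r = ⊤
  · subst hr
    rw [ContinuousAt, ray_top]
    refine tendsto_nhds_infty_of_norm fun M => ?_
    filter_upwards [lt_mem_nhds (ENNReal.ofReal_lt_top (r := M))] with r hr v hv
    by_cases hr' : r = ⊤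
    · rw [hr', ray_top] at hv
      exact absurd hv (infty_ne_coe v)
    · rw [ray_of_ne_top hr', coe_eq_coe] at hv
      rw [← hv, Complex.norm_real, Real.norm_of_nonneg ENNReal.toReal_nonneg]
      by_contra hle
      have := ENNReal.ofReal_le_ofReal (not_lt.1 hle)
      rw [ENNReal.ofReal_toReal hr'] at this
      exact this.not_gt hr
  · have h : ContinuousAt (fun r : ENNReal => ((r.toReal : ℂ) : OnePoint ℂ)) r :=
      ContinuousAt.comp (f := fun r : ENNReal => (r.toReal : ℂ)) (g := OnePoint.some)
        continuous_coe.continuousAt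
        (Complex.continuous_ofReal.continuousAt.comp (ENNReal.continuousAt_toReal hr))
    refine h.congr ?_
    filter_upwards [isOpen_ne.mem_nhds hr] with s hs
    exact (ray_of_ne_top hs).symm

theorem radius_infty : radius ∞ = ⊤ := rfl

theorem radius_coe (z : ℂ) : radius z = ENNReal.ofReal ‖z‖ := rfl

theorem continuous_radius : Continuous radius := by
  rw [OnePoint.continuous_iff]
  refine ⟨?_, ENNReal.continuous_ofReal.comp continuous_norm⟩
  rw [coclosedCompact_eq_cocompact]
  exact ENNReal.tendsto_ofReal_nhds_top.2 (tendsto_norm_cocompact_atTop)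

theorem radius_ray (r : ENNReal) : radius (ray r) = r := by
  by_cases h : r = ⊤
  · rw [h, ray_top, radius_infty]
  · rw [ray_of_ne_top h, radius_coe, Complex.norm_real,
      Real.norm_of_nonneg ENNReal.toReal_nonneg, ENNReal.ofReal_toReal h]

theorem radius_rot (θ : ℝ) (x : OnePoint ℂ) : radius (rot θ x) = radius x := by
  induction x using OnePoint.rec with
  | infty => rfl
  | coe z => rw [rot, map_some, radius_coe, radius_coe, norm_exp_mul_I_mul]

theorem rot_infty (θ : ℝ) : rot θ ∞ = ∞ := rfl

theorem rot_zero (θ : ℝ) : rot θ ((0 : ℂ) : OnePoint ℂ) = ((0 : ℂ) : OnePoint ℂ) := by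
  simp [rot]

theorem rot_add (θ φ : ℝ) (x : OnePoint ℂ) : rot (θ + φ) x = rot θ (rot φ x) := by
  induction x using OnePoint.rec with
  | infty => rfl
  | coe z => simp [rot, add_mul, Complex.exp_add, mul_assoc]

theorem rotProd_infty (θ : ℝ) : rotProd θ ∞ = ∞ := rfl

theorem rotProd_add (θ φ : ℝ) (x : OnePoint (ℂ × ℝ)) :
    rotProd (θ + φ) x = rotProd θ (rotProd φ x) := by
  induction x using OnePoint.rec with
  | infty => rfl
  | coe z => simp [rotProd, add_mul, Complex.exp_add, mul_assoc]

theorem rotProd_of_exp_eq_one {θ : ℝ} (h : Complex.exp (θ * Complex.I) = 1)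
    (x : OnePoint (ℂ × ℝ)) : rotProd θ x = x := by
  induction x using OnePoint.rec with
  | infty => rfl
  | coe z => simp [rotProd, h]

theorem rotProd_zero_angle (x : OnePoint (ℂ × ℝ)) : rotProd 0 x = x :=
  rotProd_of_exp_eq_one (by simp) x

theorem exists_rot_ray (x : OnePoint ℂ) : ∃ θ ∈ Icc (-π) π, rot θ (ray (radius x)) = x := by
  induction x using OnePoint.rec with
  | infty =>
    exact ⟨0, ⟨by linarith [Real.pi_pos], Real.pi_pos.le⟩,
      by rw [radius_infty, ray_top, rot_infty]⟩
  | coe z =>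
    refine ⟨z.arg, ⟨(Complex.neg_pi_lt_arg z).le, Complex.arg_le_pi z⟩, ?_⟩
    rw [radius_coe, ray_ofReal (norm_nonneg z), rot, map_some, coe_eq_coe, mul_comm]
    exact Complex.norm_mul_exp_arg_mul_I z

/-- Two polar expressions of a point agree up to the usual ambiguity. -/
theorem rot_ray_eq {r r' : ENNReal} {θ θ' : ℝ} (h : rot θ (ray r) = rot θ' (ray r')) :
    r = r' ∧ (r = 0 ∨ r = ⊤ ∨ ∃ n : ℤ, θ = θ' + n * (2 * π)) := by
  have hr : r = r' := by
    rw [← radius_ray r, ← radius_rot θ, h, radius_rot, radius_ray]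
  subst hr
  refine ⟨rfl, ?_⟩
  by_cases h0 : r = 0
  · exact Or.inl h0
  by_cases ht : r = ⊤
  · exact Or.inr (Or.inl ht)
  refine Or.inr (Or.inr ?_)
  rw [ray_of_ne_top ht, rot, rot, map_some, map_some, coe_eq_coe] at h
  have hne : (r.toReal : ℂ) ≠ 0 := by
    exact_mod_cast (ENNReal.toReal_pos h0 ht).ne'
  obtain ⟨n, hn⟩ := Complex.exp_eq_exp_iff_exists_int.1 (mul_right_cancel₀ hne h)
  refine ⟨n, ?_⟩
  have : ((θ : ℂ) - (θ' + n * (2 * π))) * Complex.I = 0 := by linear_combination hn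
  rw [mul_eq_zero, or_iff_left Complex.I_ne_zero, sub_eq_zero] at this
  exact_mod_cast this

/-- The inclusion of the fixed circle `OnePoint ℝ` together with a contraction of it to `∞`. -/
def contraction (s : OnePoint ℝ) (r : ENNReal) : OnePoint (ℂ × ℝ) := smash (ray r) s

theorem continuous_contraction :
    Continuous fun p : OnePoint ℝ × ENNReal => contraction p.1 p.2 :=
  continuous_smash.comp ((continuous_ray.comp continuous_snd).prodMk continuous_fst)

theorem contraction_top (s : OnePoint ℝ) : contraction s ⊤ = ∞ := by
  rw [contraction, ray_top, smash_infty_left]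

theorem contraction_infty_zero : contraction ∞ 0 = ∞ := smash_infty_right _

theorem contraction_coe_zero (t : ℝ) :
    contraction t 0 = (((0 : ℂ), t) : ℂ × ℝ) := by
  rw [contraction, ray_zero, smash_coe]

theorem contraction_zero_injective : Function.Injective fun s => contraction s 0 := by
  intro s s' h
  induction s using OnePoint.rec <;> induction s' using OnePoint.rec <;>
    simp_all [contraction_infty_zero, contraction_coe_zero]

theorem rotProd_contraction_zero (θ : ℝ) (s : OnePoint ℝ) :
    rotProd θ (contraction s 0) = contraction s 0 := by
  induction s using OnePoint.rec with
  | infty => rw [contraction_infty_zero, rotProd_infty]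
  | coe t => simp [contraction_coe_zero, rotProd]

theorem exists_contraction_zero_of_rotProd_eq {θ : ℝ} (hθ : Complex.exp (θ * Complex.I) ≠ 1)
    {y : OnePoint (ℂ × ℝ)} (h : rotProd θ y = y) : ∃ s, contraction s 0 = y := by
  induction y using OnePoint.rec with
  | infty => exact ⟨∞, contraction_infty_zero⟩
  | coe p =>
    refine ⟨p.2, ?_⟩
    rw [rotProd, map_some, coe_eq_coe, Prod.ext_iff] at h
    have h1 : p.1 = 0 := by
      by_contra hp
      exact hθ (mul_right_cancel₀ hp (by simpa using h.1))
    rw [contraction_coe_zero, ← h1]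

/-- An open embedding of the line with image the open interval `(0, ∞)`. -/
def lineEmbedding (v : EuclideanSpace ℝ (Fin 1)) : ENNReal := ENNReal.ofReal (Real.exp (v 0))

theorem range_lineEmbedding : range lineEmbedding = Ioo 0 ⊤ := by
  ext r
  constructor
  · rintro ⟨v, rfl⟩
    exact ⟨ENNReal.ofReal_pos.2 (Real.exp_pos _), ENNReal.ofReal_lt_top⟩
  · rintro ⟨h0, ht⟩
    refine ⟨!₂[Real.log r.toReal], ?_⟩
    simp [lineEmbedding, Real.exp_log (ENNReal.toReal_pos h0.ne' ht.ne), ht.ne]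

theorem isOpenEmbedding_lineEmbedding : IsOpenEmbedding lineEmbedding := by
  have hmono : StrictMono fun t : ℝ => ENNReal.ofReal (Real.exp t) := fun s t h =>
    (ENNReal.ofReal_lt_ofReal_iff (Real.exp_pos t)).2 (Real.exp_lt_exp.2 h)
  let e : EuclideanSpace ℝ (Fin 1) ≃ₜ ℝ :=
    (EuclideanSpace.equiv (Fin 1) ℝ).toHomeomorph.trans (Homeomorph.funUnique (Fin 1) ℝ)
  have hcomp : lineEmbedding = (fun t : ℝ => ENNReal.ofReal (Real.exp t)) ∘ e := rfl
  have hrange : range (fun t : ℝ => ENNReal.ofReal (Real.exp t)) = Ioo 0 ⊤ := by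
    rw [← range_lineEmbedding, hcomp, e.surjective.range_comp]
  rw [hcomp]
  refine IsOpenEmbedding.comp ⟨hmono.isEmbedding_of_ordConnected ?_, ?_⟩ e.isOpenEmbedding
  · rw [hrange]; exact ordConnected_Ioo
  · rw [hrange]; exact isOpen_Ioo

/-- An open embedding of the plane with image the complement of the closed positive ray. -/
def planeEmbedding (v : EuclideanSpace ℝ (Fin 2)) : OnePoint ℂ :=
  ((-Complex.exp ⟨v 0, 2 * Real.arctan (v 1)⟩ : ℂ) : OnePoint ℂ)

theorem isOpenEmbedding_planeEmbedding : IsOpenEmbedding planeEmbedding := by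
  let e : EuclideanSpace ℝ (Fin 2) ≃ₜ ℝ × ℝ :=
    (EuclideanSpace.equiv (Fin 2) ℝ).toHomeomorph.trans Homeomorph.finTwoArrow
  have harc : IsOpenEmbedding fun t : ℝ => 2 * Real.arctan t := by
    have hr : range (fun t : ℝ => 2 * Real.arctan t) = Ioo (-π) π := by
      ext t
      constructor
      · rintro ⟨s, rfl⟩
        constructor <;> dsimp only <;>
          linarith [Real.neg_pi_div_two_lt_arctan s, Real.arctan_lt_pi_div_two s]
      · rintro ⟨h1, h2⟩
        refine ⟨Real.tan (t / 2), ?_⟩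
        dsimp only
        rw [Real.arctan_tan (by linarith) (by linarith)]
        ring
    refine ⟨(Real.arctan_strictMono.const_mul two_pos).isEmbedding_of_ordConnected ?_, ?_⟩
    · rw [hr]; exact ordConnected_Ioo
    · rw [hr]; exact isOpen_Ioo
  have hstrip : IsOpenEmbedding fun p : ℝ × ℝ => Complex.equivRealProdCLM.symm
      (p.1, 2 * Real.arctan p.2) :=
    Complex.equivRealProdCLM.symm.toHomeomorph.isOpenEmbedding.comp
      (IsOpenEmbedding.id.prodMap harc)
  have hmem : ∀ v, (Complex.equivRealProdCLM.symm ((e v).1, 2 * Real.arctan (e v).2)) ∈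
      Complex.expOpenPartialHomeomorph.source := by
    intro v
    constructor <;> simp <;>
      linarith [Real.neg_pi_div_two_lt_arctan (e v).2, Real.arctan_lt_pi_div_two (e v).2]
  have hexp : IsOpenEmbedding fun v => Complex.expOpenPartialHomeomorph
      (Complex.equivRealProdCLM.symm ((e v).1, 2 * Real.arctan (e v).2)) := by
    have := hstrip.comp e.isOpenEmbedding
    refine IsOpenEmbedding.of_continuous_injective_isOpenMap ?_ ?_ ?_
    · exact Complex.continuous_exp.comp this.continuous
    · intro v w h
      exact this.injective (Complex.expOpenPartialHomeomorph.injOn (hmem v) (hmem w) h)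
    · intro s hs
      have h2 := Complex.expOpenPartialHomeomorph.isOpen_image_of_subset_source
        (this.isOpenMap s hs) (by rintro _ ⟨v, -, rfl⟩; exact hmem v)
      rwa [image_image] at h2
  have := (isOpenEmbedding_coe (X := ℂ)).comp ((Homeomorph.neg ℂ).isOpenEmbedding.comp hexp)
  convert this using 1
  funext v
  simp only [planeEmbedding, Function.comp, Homeomorph.coe_neg]
  congr 3

theorem ray_notMem_range_planeEmbedding (r : ENNReal) : ray r ∉ range planeEmbedding := by
  rintro ⟨v, hv⟩
  by_cases hr : r = ⊤
  · rw [hr, ray_top] at hv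
    exact absurd hv (coe_ne_infty _)
  · rw [ray_of_ne_top hr, planeEmbedding, coe_eq_coe] at hv
    have h1 := Real.neg_pi_div_two_lt_arctan (v 1)
    have h2 := Real.arctan_lt_pi_div_two (v 1)
    have hmem : Complex.exp ⟨v 0, 2 * Real.arctan (v 1)⟩ ∈
        Complex.slitPlane :=
      Complex.expOpenPartialHomeomorph.map_source (by constructor <;> simp <;> linarith)
    rw [← neg_eq_iff_eq_neg.2 hv.symm] at hmem
    have := (Complex.ofReal_mem_slitPlane (x := -r.toReal)).1 (by simpa using hmem)
    linarith [ENNReal.toReal_nonneg (a := r)]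

theorem ray_radius_of_notMem_range_planeEmbedding {x : OnePoint ℂ}
    (h : x ∉ range planeEmbedding) : ray (radius x) = x := by
  induction x using OnePoint.rec with
  | infty => rw [radius_infty, ray_top]
  | coe z =>
    have hz : -z ∉ Complex.slitPlane := by
      intro hz
      obtain ⟨h1, h2⟩ := Complex.expOpenPartialHomeomorph.map_target hz
      refine h ⟨!₂[(Complex.log (-z)).re, Real.tan ((Complex.log (-z)).im / 2)], ?_⟩
      rw [planeEmbedding, coe_eq_coe, neg_eq_iff_eq_neg]
      have h3 : (2 * Real.arctan (Real.tan ((Complex.log (-z)).im / 2))) =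
          (Complex.log (-z)).im := by
        rw [Real.arctan_tan (by linarith [show -π < (Complex.log (-z)).im from h1])
          (by linarith [show (Complex.log (-z)).im < π from h2])]
        ring
      refine Eq.trans ?_ (Complex.exp_log (Complex.slitPlane_ne_zero hz))
      congr 1
      simp [h3]
    rw [Complex.mem_slitPlane_iff, not_or] at hz
    simp only [Complex.neg_re, Complex.neg_im, not_lt, not_not] at hz
    have hz' : z = (z.re : ℂ) := by
      apply Complex.ext <;> simp
      linarith [hz.2]
    have h0 : 0 ≤ z.re := by linarith [hz.1]
    rw [radius_coe, ray_ofReal (norm_nonneg z), coe_eq_coe]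
    rw [hz', Complex.norm_real, Real.norm_of_nonneg h0]

theorem exp_int_mul_two_pi (n : ℤ) :
    Complex.exp (((n * (2 * π) : ℝ) : ℂ) * Complex.I) = 1 :=
  Complex.exp_eq_one_iff.2 ⟨n, by push_cast; ring⟩

theorem rot_int_mul_two_pi (n : ℤ) (x : OnePoint ℂ) : rot (n * (2 * π)) x = x := by
  induction x using OnePoint.rec with
  | infty => rfl
  | coe z => rw [rot, map_some, exp_int_mul_two_pi, one_mul]

theorem rotProd_int_mul_two_pi (n : ℤ) (x : OnePoint (ℂ × ℝ)) :
    rotProd (n * (2 * π)) x = x :=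
  rotProd_of_exp_eq_one (exp_int_mul_two_pi n) x

theorem rotAct_val_eq (m : ℕ) (k : ZMod m) :
    rotAct m k = fun z => Complex.exp ((2 * π * k.val / m : ℝ) * Complex.I) * z := by
  funext z
  rw [rotAct]
  congr 2
  push_cast
  ring

theorem map_rotAct (m : ℕ) (k : ZMod m) :
    OnePoint.map (rotAct m k) = rot (2 * π * k.val / m) := by
  rw [rotAct_val_eq]
  rfl

theorem map_rotAct_prod (m : ℕ) (k : ZMod m) :
    OnePoint.map (fun p : ℂ × ℝ => (rotAct m k p.1, p.2)) = rotProd (2 * π * k.val / m) := by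
  rw [rotAct_val_eq]
  rfl

/-- Equivariant based maps `OnePoint ℂ → OnePoint (ℂ × ℝ)`. -/
abbrev EquivariantMaps (m : ℕ) : Type :=
  {f : C(OnePoint ℂ, OnePoint (ℂ × ℝ)) //
    f OnePoint.infty = OnePoint.infty ∧
    ∀ (k : ZMod m) (x : OnePoint ℂ),
      f (OnePoint.map (rotAct m k) x) =
        OnePoint.map (fun p => (rotAct m k p.1, p.2)) (f x)}

/-- Based maps `OnePoint ℂ → OnePoint (ℂ × ℝ)` that send `0` to the fixed circle. -/
abbrev CircleOriginMaps : Type :=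
  {h : C(OnePoint ℂ, OnePoint (ℂ × ℝ)) //
    h ∞ = ∞ ∧ ∃ s, contraction s 0 = h ((0 : ℂ) : OnePoint ℂ)}

namespace EquivariantMaps

variable {m : ℕ}

theorem apply_rot_int [NeZero m] (f : EquivariantMaps m) (n : ℤ) (x : OnePoint ℂ) :
    f.1 (rot (2 * π * n / m) x) = rotProd (2 * π * n / m) (f.1 x) := by
  have hm : (m : ℝ) ≠ 0 := NeZero.ne _
  have hdecomp : 2 * π * n / m =
      2 * π * ((n : ZMod m).val : ℝ) / m + ((n / m : ℤ) : ℝ) * (2 * π) := by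
    have h1 : ((n : ZMod m).val : ℤ) = n % m := ZMod.val_intCast n
    have h2 : ((n : ZMod m).val : ℝ) + m * ((n / m : ℤ) : ℝ) = n := by
      have h3 := Int.emod_add_mul_ediv n m
      rw [← h1] at h3
      exact_mod_cast h3
    field_simp
    linear_combination -h2
  rw [hdecomp, rot_add, rotProd_add, rot_int_mul_two_pi, rotProd_int_mul_two_pi, ← map_rotAct,
    ← map_rotAct_prod, f.2.2]

theorem exists_contraction_zero (hm : 2 ≤ m) (f : EquivariantMaps m) :
    ∃ s, contraction s 0 = f.1 ((0 : ℂ) : OnePoint ℂ) := by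
  have : NeZero m := ⟨by omega⟩
  have h := f.apply_rot_int 1 ((0 : ℂ) : OnePoint ℂ)
  rw [rot_zero] at h
  refine exists_contraction_zero_of_rotProd_eq (fun hexp => ?_) h.symm
  have hprim := Complex.isPrimitiveRoot_exp m (by omega)
  refine hprim.ne_one (by omega) (Eq.trans ?_ hexp)
  congr 1
  push_cast
  ring

end EquivariantMaps

theorem exists_untwist {T : Type*} [TopologicalSpace T] {F : T → ENNReal × ℝ → OnePoint (ℂ × ℝ)}
    (hF : Continuous fun p : T × (ENNReal × ℝ) => F p.1 p.2)
    (h0 : ∀ t θ θ', F t (0, θ) = F t (0, θ')) (htop : ∀ t θ θ', F t (⊤, θ) = F t (⊤, θ'))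
    (hper : ∀ t r θ (n : ℤ), F t (r, θ + n * (2 * π)) = F t (r, θ)) :
    ∃ G : T → C(OnePoint ℂ, OnePoint (ℂ × ℝ)), Continuous G ∧
      ∀ t r θ, G t (rot θ (ray r)) = F t (r, θ) := by
  obtain ⟨G, hG, hGF⟩ := exists_descend (q := fun p : ENNReal × ℝ => rot p.2 (ray p.1))
    (continuous_rot.comp (continuous_snd.prodMk (continuous_ray.comp continuous_fst)))
    (isCompact_univ.prod (isCompact_Icc (a := -π) (b := π)))
    (fun x => by
      obtain ⟨θ, hθ, h⟩ := exists_rot_ray x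
      exact ⟨(radius x, θ), ⟨mem_univ _, hθ⟩, h⟩) hF (by
      rintro t ⟨r, θ⟩ ⟨r', θ'⟩ h
      change rot θ (ray r) = rot θ' (ray r') at h
      obtain ⟨rfl, rfl | rfl | ⟨n, rfl⟩⟩ := rot_ray_eq h
      exacts [h0 _ _ _, htop _ _ _, hper _ _ _ _])
  exact ⟨G, hG, fun t r θ => hGF t (r, θ)⟩

theorem ext_rot_ray {f g : C(OnePoint ℂ, OnePoint (ℂ × ℝ))}
    (h : ∀ r θ, f (rot θ (ray r)) = g (rot θ (ray r))) : f = g := by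
  ext1 x
  obtain ⟨θ, -, hx⟩ := exists_rot_ray x
  rw [← hx, h]

/-- Untwisting the rotation identifies equivariant maps with maps on the quotient sphere. -/
theorem nonempty_equivariantMaps_homeomorph {m : ℕ} (hm : 2 ≤ m) :
    Nonempty (EquivariantMaps m ≃ₜ CircleOriginMaps) := by
  have : NeZero m := ⟨by omega⟩
  have hm0 : (m : ℝ) ≠ 0 := NeZero.ne _
  have hray : Continuous fun p : ℝ × ENNReal => rot p.1 (ray p.2) :=
    continuous_rot.comp (continuous_fst.prodMk (continuous_ray.comp continuous_snd))
  obtain ⟨U, hU, hUF⟩ := exists_untwist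
    (F := fun (f : EquivariantMaps m) p => rotProd (-p.2 / m) (f.1 (rot (p.2 / m) (ray p.1))))
    (by
      refine continuous_rotProd.comp (.prodMk (by fun_prop) (.eval (by fun_prop) ?_))
      exact hray.comp (.prodMk (by fun_prop) (by fun_prop)))
    (fun f θ θ' => by
      obtain ⟨s, hs⟩ := f.exists_contraction_zero hm
      simp only [ray_zero, rot_zero, ← hs, rotProd_contraction_zero])
    (fun f θ θ' => by simp only [ray_top, rot_infty, f.2.1, rotProd_infty])
    (fun f r θ n => by
      dsimp only
      rw [show (θ + n * (2 * π)) / m = 2 * π * n / m + θ / m by ring, rot_add,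
        f.apply_rot_int, ← rotProd_add]
      congr 1
      ring)
  obtain ⟨V, hV, hVF⟩ := exists_untwist
    (F := fun (h : CircleOriginMaps) p => rotProd p.2 (h.1 (rot (m * p.2) (ray p.1))))
    (by
      refine continuous_rotProd.comp (.prodMk (by fun_prop) (.eval (by fun_prop) ?_))
      exact hray.comp (.prodMk (by fun_prop) (by fun_prop)))
    (fun h θ θ' => by
      obtain ⟨s, hs⟩ := h.2.2
      simp only [ray_zero, rot_zero, ← hs, rotProd_contraction_zero])
    (fun h θ θ' => by simp only [ray_top, rot_infty, h.2.1, rotProd_infty])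
    (fun h r θ n => by
      dsimp only
      rw [rotProd_add, rotProd_int_mul_two_pi,
        show (m : ℝ) * (θ + n * (2 * π)) = m * θ + ((m * n : ℤ) : ℝ) * (2 * π) by
          push_cast; ring, rot_add, rot_int_mul_two_pi])
  have hU' : ∀ f : EquivariantMaps m, U f ∞ = ∞ ∧
      ∃ s, contraction s 0 = U f ((0 : ℂ) : OnePoint ℂ) := by
    intro f
    have h1 := hUF f ⊤ 0
    have h2 := hUF f 0 0
    obtain ⟨s, hs⟩ := f.exists_contraction_zero hm
    simp only [ray_zero, ray_top, rot_zero, rot_infty, f.2.1, rotProd_infty, ← hs,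
      rotProd_contraction_zero] at h1 h2
    exact ⟨h1, s, h2.symm⟩
  have hV' : ∀ h : CircleOriginMaps, V h ∞ = ∞ ∧ ∀ (k : ZMod m) (x : OnePoint ℂ),
      V h (OnePoint.map (rotAct m k) x) =
        OnePoint.map (fun p => (rotAct m k p.1, p.2)) (V h x) := by
    intro h
    refine ⟨?_, fun k x => ?_⟩
    · have h1 := hVF h ⊤ 0
      simpa only [ray_top, rot_infty, h.2.1, rotProd_infty] using h1
    · obtain ⟨θ, -, hx⟩ := exists_rot_ray x
      rw [map_rotAct, map_rotAct_prod, ← hx, ← rot_add, hVF, hVF]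
      dsimp only
      rw [show (m : ℝ) * (2 * π * k.val / m + θ) = m * θ + ((k.val : ℤ) : ℝ) * (2 * π) by
        push_cast; field_simp; ring, rot_add _ (((k.val : ℤ) : ℝ) * _), rot_int_mul_two_pi,
        rotProd_add]
  refine ⟨⟨⟨fun f => ⟨U f, hU' f⟩, fun h => ⟨V h, hV' h⟩, fun f => ?_, fun h => ?_⟩, ?_, ?_⟩⟩
  · refine Subtype.ext (ext_rot_ray fun r θ => ?_)
    rw [hVF]
    dsimp only
    rw [hUF]
    dsimp only
    rw [← rotProd_add, mul_div_cancel_left₀ _ hm0, neg_div, mul_div_cancel_left₀ _ hm0,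
      add_neg_cancel, rotProd_zero_angle]
  · refine Subtype.ext (ext_rot_ray fun r θ => ?_)
    rw [hUF]
    dsimp only
    rw [hVF]
    dsimp only
    rw [← rotProd_add, mul_div_cancel₀ _ hm0, neg_div, neg_add_cancel, rotProd_zero_angle]
  · exact hU.subtype_mk _
  · exact hV.subtype_mk _

/-- A topological group structure on the target splits the space of maps into the values at the
origin, the loops along a ray and the maps on the complement of the ray. -/
theorem nonempty_circleOriginMaps_homeomorph {G : Type*} [Group G] [TopologicalSpace G]
    [IsTopologicalGroup G] (Φ : OnePoint (ℂ × ℝ) ≃ₜ G)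
    (Ψ : OnePoint (EuclideanSpace ℝ (Fin 3)) ≃ₜ G) (hΨ : Ψ ∞ = 1) :
    Nonempty (CircleOriginMaps ≃ₜ BasedSphereMaps 1 3 × OnePoint ℝ × BasedSphereMaps 2 3) := by
  have hΨ' : Ψ.symm 1 = ∞ := by rw [← hΨ, Ψ.symm_apply_apply]
  have hline := isOpenEmbedding_lineEmbedding
  have hplane := isOpenEmbedding_planeEmbedding
  have hc1 := continuous_collapse hline
  have hc2 := continuous_collapse hplane
  have hline_mem : ∀ r : ENNReal, r ∉ range lineEmbedding ↔ r = 0 ∨ r = ⊤ := by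
    intro r
    rw [range_lineEmbedding, mem_Ioo, not_and_or, not_lt, not_lt, nonpos_iff_eq_zero, top_le_iff]
  have hl0 : collapse lineEmbedding 0 = ∞ := collapse_of_notMem ((hline_mem 0).2 (Or.inl rfl))
  have hlt : collapse lineEmbedding ⊤ = ∞ := collapse_of_notMem ((hline_mem ⊤).2 (Or.inr rfl))
  have hpr : ∀ r, collapse planeEmbedding (ray r) = ∞ := fun r =>
    collapse_of_notMem (ray_notMem_range_planeEmbedding r)
  have hcontr := continuous_contraction
  have hι : IsEmbedding fun s => contraction s 0 :=
    (Continuous.isClosedEmbedding (hcontr.comp (continuous_id.prodMk continuous_const))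
      contraction_zero_injective).isEmbedding
  choose s hs using fun h : CircleOriginMaps => h.2.2
  have hs_cont : Continuous s := by
    rw [hι.continuous_iff]
    have : (fun s => contraction s 0) ∘ s =
        fun h : CircleOriginMaps => h.1 ((0 : ℂ) : OnePoint ℂ) := funext hs
    rw [this]
    fun_prop
  have hray := continuous_ray
  have hradius := continuous_radius
  obtain ⟨Q, hQ, hQF⟩ := exists_descend (T := CircleOriginMaps) hc1 isCompact_univ
    (fun b => by simpa using collapse_surjective hline.injective ((hline_mem 0).2 (Or.inl rfl)) b)
    (F := fun h r => Ψ.symm (Φ (h.1 (ray r)) * (Φ (contraction (s h) r))⁻¹))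
    (by
      refine Ψ.symm.continuous.comp (.mul (by fun_prop) (.inv (Φ.continuous.comp ?_)))
      exact hcontr.comp (.prodMk (by fun_prop) (by fun_prop)))
    (fun h r r' hrr => by
      rcases collapse_eq_collapse hline.injective hrr with rfl | ⟨h1, h2⟩
      · rfl
      · have key : ∀ r : ENNReal, r = 0 ∨ r = ⊤ →
            Φ (h.1 (ray r)) * (Φ (contraction (s h) r))⁻¹ = 1 := by
          rintro r (rfl | rfl)
          · rw [ray_zero, hs, mul_inv_cancel]
          · rw [ray_top, h.2.1, contraction_top, mul_inv_cancel]
        rw [key r ((hline_mem r).1 h1), key r' ((hline_mem r').1 h2)])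
  obtain ⟨K, hK, hKF⟩ := exists_descend (T := CircleOriginMaps) hc2 isCompact_univ
    (fun b => by
      simpa using collapse_surjective hplane.injective (ray_notMem_range_planeEmbedding 0) b)
    (F := fun h x => Ψ.symm (Φ (h.1 x) * (Φ (h.1 (ray (radius x))))⁻¹))
    (by fun_prop)
    (fun h x x' hxx => by
      rcases collapse_eq_collapse hplane.injective hxx with rfl | ⟨h1, h2⟩
      · rfl
      · rw [ray_radius_of_notMem_range_planeEmbedding h1,
          ray_radius_of_notMem_range_planeEmbedding h2, mul_inv_cancel, mul_inv_cancel])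
  have hQ' : ∀ h, Q h ∞ = ∞ := fun h => by
    rw [← hlt, hQF, ray_top, h.2.1, contraction_top, mul_inv_cancel, hΨ']
  have hK' : ∀ h, K h ∞ = ∞ := fun h => by
    rw [← hpr ⊤, hKF, radius_ray, mul_inv_cancel, hΨ']
  let J : BasedSphereMaps 1 3 × OnePoint ℝ × BasedSphereMaps 2 3 →
      OnePoint ℂ → OnePoint (ℂ × ℝ) := fun p x =>
    Φ.symm (Ψ (p.2.2.1 (collapse planeEmbedding x)) *
      Ψ (p.1.1 (collapse lineEmbedding (radius x))) * Φ (contraction p.2.1 (radius x)))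
  have hJ : Continuous fun q : (BasedSphereMaps 1 3 × OnePoint ℝ × BasedSphereMaps 2 3) ×
      OnePoint ℂ => J q.1 q.2 := by
    refine Φ.symm.continuous.comp (.mul (by fun_prop) (Φ.continuous.comp ?_))
    exact hcontr.comp (.prodMk (by fun_prop) (hradius.comp continuous_snd))
  let I : C(BasedSphereMaps 1 3 × OnePoint ℝ × BasedSphereMaps 2 3,
      C(OnePoint ℂ, OnePoint (ℂ × ℝ))) := ContinuousMap.curry ⟨_, hJ⟩
  have hIJ : ∀ p x, Φ (I p x) = Ψ (p.2.2.1 (collapse planeEmbedding x)) *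
      Ψ (p.1.1 (collapse lineEmbedding (radius x))) * Φ (contraction p.2.1 (radius x)) :=
    fun p x => Φ.apply_symm_apply _
  have hIray : ∀ p r, Φ (I p (ray r)) =
      Ψ (p.1.1 (collapse lineEmbedding r)) * Φ (contraction p.2.1 r) := fun p r => by
    rw [hIJ, hpr, p.2.2.2, hΨ, one_mul, radius_ray]
  have hI0 : ∀ p, I p ((0 : ℂ) : OnePoint ℂ) = contraction p.2.1 0 := fun p => by
    apply Φ.injective
    rw [← ray_zero, hIray, hl0, p.1.2, hΨ, one_mul]
  have hI' : ∀ p, I p ∞ = ∞ ∧ ∃ s, contraction s 0 = I p ((0 : ℂ) : OnePoint ℂ) := by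
    refine fun p => ⟨Φ.injective ?_, p.2.1, (hI0 p).symm⟩
    rw [← ray_top, hIray, hlt, p.1.2, hΨ, one_mul, contraction_top]
  have hsI : ∀ p, s ⟨I p, hI' p⟩ = p.2.1 := fun p =>
    contraction_zero_injective ((hs ⟨I p, hI' p⟩).trans (hI0 p))
  refine ⟨⟨⟨fun h => (⟨Q h, hQ' h⟩, s h, ⟨K h, hK' h⟩), fun p => ⟨I p, hI' p⟩,
    fun h => ?_, fun p => ?_⟩, ?_, ?_⟩⟩
  · refine Subtype.ext (ContinuousMap.ext fun x => Φ.injective ?_)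
    rw [hIJ]
    dsimp only
    rw [hKF, hQF, Ψ.apply_symm_apply, Ψ.apply_symm_apply]
    group
  · refine Prod.ext (Subtype.ext (ContinuousMap.ext fun x => ?_))
      (Prod.ext (hsI p) (Subtype.ext (ContinuousMap.ext fun x => ?_)))
    · obtain ⟨r, rfl⟩ := collapse_surjective hline.injective ((hline_mem 0).2 (Or.inl rfl)) x
      dsimp only
      rw [hQF, hIray, hsI, mul_inv_cancel_right, Ψ.symm_apply_apply]
    · obtain ⟨z, rfl⟩ := collapse_surjective hplane.injective
        (ray_notMem_range_planeEmbedding 0) x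
      dsimp only
      rw [hKF, hIray, hIJ, mul_assoc (Ψ _), mul_inv_cancel_right, Ψ.symm_apply_apply]
  · exact (hQ.subtype_mk _).prodMk (hs_cont.prodMk (hK.subtype_mk _))
  · exact I.continuous.subtype_mk _

/-- The one-point compactification of a three-dimensional real vector space is the group of unit
quaternions, based at the identity. -/
theorem exists_homeomorph_unit_quaternions {V : Type*} [AddCommGroup V] [Module ℝ V]
    [FiniteDimensional ℝ V] [TopologicalSpace V] [IsTopologicalAddGroup V]
    [ContinuousSMul ℝ V] [T2Space V] (hV : Module.finrank ℝ V = 3) :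
    ∃ Φ : OnePoint V ≃ₜ Metric.sphere (0 : Quaternion ℝ) 1, Φ ∞ = 1 := by
  have : Fact (Module.finrank ℝ (Quaternion ℝ) = 3 + 1) := ⟨Quaternion.finrank_eq_four⟩
  have hdim : Module.finrank ℝ V = Module.finrank ℝ (Submodule.span ℝ {(1 : Quaternion ℝ)})ᗮ := by
    rw [hV, Submodule.finrank_orthogonal_span_singleton (n := 3) one_ne_zero]
  obtain ⟨e⟩ := FiniteDimensional.nonempty_continuousLinearEquiv_of_finrank_eq hdim
  let Θ : OnePoint V ≃ₜ Metric.sphere (0 : Quaternion ℝ) 1 :=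
    e.toHomeomorph.onePointCongr.trans (onePointHyperplaneHomeoUnitSphere norm_one)
  exact ⟨Θ.trans (Homeomorph.mulLeft (Θ ∞)⁻¹), inv_mul_cancel _⟩

end RotationSphere

theorem equivariant_maps_cyclic_rotation_htpyEquiv (m : ℕ) (hm : 2 ≤ m) :
    Nonempty (ContinuousMap.HomotopyEquiv
      {f : C(OnePoint ℂ, OnePoint (ℂ × ℝ)) //
        f OnePoint.infty = OnePoint.infty ∧
        ∀ (k : ZMod m) (x : OnePoint ℂ),
          f (OnePoint.map (rotAct m k) x) =
            OnePoint.map (fun p => (rotAct m k p.1, p.2)) (f x)}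
      (BasedSphereMaps 1 3 × OnePoint ℝ × BasedSphereMaps 2 3)) := by
  obtain ⟨e⟩ := RotationSphere.nonempty_equivariantMaps_homeomorph hm
  obtain ⟨Φ, -⟩ := RotationSphere.exists_homeomorph_unit_quaternions (V := ℂ × ℝ)
    (by simp [Complex.finrank_real_complex])
  obtain ⟨Ψ, hΨ⟩ := RotationSphere.exists_homeomorph_unit_quaternions
    (V := EuclideanSpace ℝ (Fin 3)) (by simp)
  obtain ⟨e'⟩ := RotationSphere.nonempty_circleOriginMaps_homeomorph Φ Ψ hΨ
  exact ⟨(e.trans e').toHomotopyEquiv⟩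

end
end

section
/- Let n ≥ 2, set m = 2^(n-1), and let the dihedral group DihedralGroup m (of order 2^n) act faithfully on ℂ by the standard dihedral action, in which the rotation r k acts by multiplication by exp(2πik/m) and the reflection sr k acts by the composition of complex conjugation with a rotation (with the sign convention making this a left action); let it act on ℂ × ℝ via this action on ℂ and trivially on ℝ, and on the one-point compactifications OnePoint ℂ and OnePoint (ℂ × ℝ) by the induced actions fixing ∞ (based at ∞). Then the space Map^{DihedralGroup m}_*(OnePoint ℂ, OnePoint (ℂ × ℝ)) of equivariant basepoint-preserving continuous maps is homotopy equivalent to Map_*(S¹, S²) × Map_*(S¹, S²) × OnePoint ℝ × Map_*(S², S³), i.e. to Ω S² × Ω S² × S¹ × Ω² S³. -/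
/-!
STATEMENT 3: For `n ≥ 2` and `m = 2^(n-1)`, with the dihedral group
`DihedralGroup m` (of order `2^n`) acting faithfully on `ℂ` by the standard
dihedral action (rotations `r k` act by multiplication by `exp(2πik/m)` and
reflections `sr k` act by a rotation composed with complex conjugation, with
the sign convention making this a left action), the space of equivariant based
maps `Map^{DihedralGroup m}_*(OnePoint ℂ, OnePoint (ℂ × ℝ))` is homotopy
equivalent to `Ω S² × Ω S² × S¹ × Ω² S³`.
-/

noncomputable section

/-- The standard dihedral action of `DihedralGroup m` on `ℂ`: the rotation
`r k` acts by multiplication by `exp(2πik/m)`, and the reflection `sr k` acts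
by complex conjugation composed with such a rotation (here `sr k` sends `z` to
`conj (exp(2πik/m) * z) = exp(-2πik/m) * conj z`, the sign convention making
this a left action). -/
def dihedralAct (m : ℕ) : DihedralGroup m → ℂ → ℂ
  | DihedralGroup.r k => fun z => Complex.exp (2 * Real.pi * Complex.I * (k.val : ℂ) / (m : ℂ)) * z
  | DihedralGroup.sr k => fun z =>
      (starRingEnd ℂ) (Complex.exp (2 * Real.pi * Complex.I * (k.val : ℂ) / (m : ℂ)) * z)

open Set Filter Topology
open scoped unitInterval OnePoint

section OnePointNormed

variable {E : Type*} [NormedAddCommGroup E]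

theorem OnePoint.tendsto_nhds_infty_of_norm_s3 {Y : Type*} {l : Filter Y} {h : Y → OnePoint E}
    (H : ∀ R : ℝ, ∀ᶠ y in l, ∀ x : E, h y = ↑x → R < ‖x‖) : Tendsto h l (𝓝 ∞) := by
  refine OnePoint.hasBasis_nhds_infty.tendsto_right_iff.2 fun s hs => ?_
  obtain ⟨R, hR⟩ := hs.2.isBounded.exists_norm_le
  filter_upwards [H R] with y hy
  induction hx : h y using OnePoint.rec with
  | infty => exact Or.inr rfl
  | coe x => exact Or.inl ⟨x, fun hxs => (hy x hx).not_ge (hR x hxs), rfl⟩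

theorem OnePoint.eventually_norm_lt [ProperSpace E] (R : ℝ) :
    ∀ᶠ p : OnePoint E in 𝓝 ∞, ∀ x : E, p = ↑x → R < ‖x‖ := by
  have hmem := OnePoint.hasBasis_nhds_infty.mem_of_mem (i := Metric.closedBall (0 : E) R)
    ⟨Metric.isClosed_closedBall, isCompact_closedBall 0 R⟩
  filter_upwards [hmem] with p hp x hx
  subst hx
  simpa using hp

/-- Translations of `E` extended to the one-point compactification, jointly continuous. -/
def OnePoint.translation (E : Type*) [NormedAddCommGroup E] [ProperSpace E] :
    C(E × OnePoint E, OnePoint E) where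
  toFun p := OnePoint.map (p.1 + ·) p.2
  continuous_toFun := by
    refine continuous_iff_continuousAt.2 ?_
    rintro ⟨w, p⟩
    induction p using OnePoint.rec with
    | infty =>
      refine OnePoint.tendsto_nhds_infty_of_norm_s3 fun R => ?_
      have h1 : ∀ᶠ v : E in 𝓝 w, ‖v‖ < ‖w‖ + 1 :=
        continuous_norm.continuousAt.eventually_lt_const (by simp)
      rw [nhds_prod_eq]
      filter_upwards [h1.prod_mk (OnePoint.eventually_norm_lt (E := E) (R + (‖w‖ + 1)))]
      rintro ⟨v, p⟩ ⟨hv, hp⟩ x hx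
      induction p using OnePoint.rec with
      | infty => simp at hx
      | coe y =>
        have hxy : v + y = x := by simpa using hx
        have hy := hp y rfl
        have : ‖y‖ ≤ ‖x‖ + ‖v‖ := by
          calc ‖y‖ = ‖x - v‖ := by rw [← hxy]; simp
            _ ≤ _ := norm_sub_le _ _
        dsimp at hv
        linarith
    | coe y =>
      have ho : IsOpenEmbedding (Prod.map id (↑) : E × E → E × OnePoint E) :=
        IsOpenEmbedding.id.prodMap OnePoint.isOpenEmbedding_coe
      refine (ho.continuousAt_iff (x := (w, y))).1 ?_
      exact (OnePoint.continuous_coe.comp continuous_add).continuousAt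

variable [NormedSpace ℝ E]

theorem OnePoint.continuous_inv_smul {Y : Type*} [TopologicalSpace Y] {c : Y → ℝ} {w : Y → E}
    (hc : Continuous c) (hw : Continuous w) (h0 : ∀ y, c y = 0 → w y ≠ 0) :
    Continuous fun y => if c y = 0 then (∞ : OnePoint E) else ((c y)⁻¹ • w y : E) := by
  refine continuous_iff_continuousAt.2 fun y => ?_
  by_cases hy : c y = 0
  · simp only [ContinuousAt, hy, if_true]
    refine OnePoint.tendsto_nhds_infty_of_norm_s3 fun R => ?_
    have : ∀ᶠ z in 𝓝 y, |c z| * |R| < ‖w z‖ :=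
      (by fun_prop : Continuous fun z => |c z| * |R|).continuousAt.eventually_lt
        (by fun_prop : Continuous fun z => ‖w z‖).continuousAt (by simpa [hy] using h0 y hy)
    filter_upwards [this] with z hz x hx
    split_ifs at hx with hcz
    · exact (OnePoint.infty_ne_coe _ hx).elim
    · rw [← OnePoint.coe_injective hx, norm_smul, norm_inv, Real.norm_eq_abs, inv_mul_eq_div,
        lt_div_iff₀ (abs_pos.2 hcz)]
      nlinarith [le_abs_self R, abs_nonneg (c z)]
  · have : ContinuousAt (fun y => (((c y)⁻¹ • w y : E) : OnePoint E)) y :=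
      OnePoint.continuous_coe.continuousAt.comp
        ((hc.continuousAt.inv₀ hy).smul hw.continuousAt)
    refine this.congr ?_
    filter_upwards [hc.continuousAt.eventually_ne hy] with z hz
    rw [if_neg hz]

/-- The inversion `x ↦ x / ‖x‖²`, exchanging `0` and `∞`. -/
def OnePoint.inversionFun : OnePoint E → OnePoint E
  | ∞ => (0 : E)
  | OnePoint.some x => open Classical in if x = 0 then ∞ else ((‖x‖ ^ 2)⁻¹ • x : E)

theorem OnePoint.inversionFun_involutive :
    Function.Involutive (OnePoint.inversionFun : OnePoint E → OnePoint E) := by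
  intro p
  induction p using OnePoint.rec with
  | infty => simp [OnePoint.inversionFun]
  | coe x =>
    by_cases hx : x = 0
    · simp [OnePoint.inversionFun, hx]
    · have : ‖x‖ ≠ 0 := norm_ne_zero_iff.2 hx
      simp only [OnePoint.inversionFun, hx, if_false, smul_eq_zero, inv_eq_zero, pow_eq_zero_iff,
        this, or_self, ne_eq, OfNat.ofNat_ne_zero, not_false_eq_true, norm_smul, norm_inv, norm_pow,
        norm_norm, smul_smul, OnePoint.coe_eq_coe]
      field_simp
      simp

theorem OnePoint.continuous_inversionFun [ProperSpace E] :
    Continuous (OnePoint.inversionFun : OnePoint E → OnePoint E) := by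
  refine continuous_iff_continuousAt.2 fun p => ?_
  have hn : ∀ x : E, x ≠ 0 → ‖(‖x‖ ^ 2)⁻¹ • x‖ = ‖x‖⁻¹ := fun x hx => by
    have : ‖x‖ ≠ 0 := norm_ne_zero_iff.2 hx
    rw [norm_smul, norm_inv, norm_pow, norm_norm]
    field_simp
  induction p using OnePoint.rec with
  | infty =>
    rw [OnePoint.continuousAt_infty', coclosedCompact_eq_cocompact,
      ← Metric.cobounded_eq_cocompact]
    refine (OnePoint.continuous_coe.tendsto (0 : E)).comp
      (f := fun x : E => (‖x‖ ^ 2)⁻¹ • x) ?_ |>.congr' ?_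
    · rw [tendsto_zero_iff_norm_tendsto_zero]
      refine (tendsto_inv_atTop_zero.comp tendsto_norm_cobounded_atTop).congr fun x => ?_
      by_cases hx : x = 0
      · simp [hx]
      · exact (hn x hx).symm
    · filter_upwards [tendsto_norm_cobounded_atTop.eventually_gt_atTop 0] with x hx
      simp [OnePoint.inversionFun, norm_pos_iff.1 hx]
  | coe x =>
    rw [OnePoint.continuousAt_coe]
    by_cases hx : x = 0
    · subst hx
      have : (OnePoint.inversionFun ((0 : E) : OnePoint E)) = ∞ := by simp [OnePoint.inversionFun]
      rw [ContinuousAt, Function.comp_apply, this]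
      refine OnePoint.tendsto_nhds_infty_of_norm_s3 fun R => ?_
      have : ∀ᶠ y : E in 𝓝 0, ‖y‖ < (|R| + 1)⁻¹ :=
        continuous_norm.continuousAt.eventually_lt_const (by simpa using by positivity)
      filter_upwards [this] with y hy z hz
      by_cases hy0 : y = 0
      · simp [OnePoint.inversionFun, hy0] at hz
      · simp only [OnePoint.inversionFun, Function.comp_apply, hy0, if_false,
          OnePoint.coe_eq_coe] at hz
        rw [← hz, hn y hy0]
        have := (lt_inv_comm₀ (norm_pos_iff.2 hy0) (by positivity)).1 hy
        linarith [le_abs_self R]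
    · have : ContinuousAt (fun y : E => (((‖y‖ ^ 2)⁻¹ • y : E) : OnePoint E)) x := by
        refine OnePoint.continuous_coe.continuousAt.comp ?_
        refine ContinuousAt.smul (ContinuousAt.inv₀ (by fun_prop) ?_) continuousAt_id
        simpa using hx
      refine this.congr ?_
      filter_upwards [eventually_ne_nhds hx] with y hy
      simp [OnePoint.inversionFun, hy]

/-- The inversion `x ↦ x / ‖x‖²` as a self-homeomorphism of the one-point compactification. -/
def OnePoint.inversion (E : Type*) [NormedAddCommGroup E] [NormedSpace ℝ E] [ProperSpace E] :
    OnePoint E ≃ₜ OnePoint E where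
  toEquiv := OnePoint.inversionFun_involutive.toPerm
  continuous_toFun := OnePoint.continuous_inversionFun
  continuous_invFun := OnePoint.continuous_inversionFun

/-- Translations of `OnePoint E` in a chart which sends `v` to the point at infinity. -/
theorem OnePoint.exists_translation_fixing [ProperSpace E] (v : E) :
    ∃ (T : C(E × OnePoint E, OnePoint E)) (c : C({p : OnePoint E // p ≠ v}, E)),
      (∀ p, T (0, p) = p) ∧ (∀ w w' p, T (w, T (w', p)) = T (w + w', p)) ∧
      (∀ p, T (c p, ∞) = p) ∧ (∀ h, c ⟨∞, h⟩ = 0) := by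
  let e : OnePoint E ≃ₜ OnePoint E :=
    (Homeomorph.subRight v).onePointCongr.trans (OnePoint.inversion E)
  have hev : ∀ p, e p = ∞ ↔ p = v := fun p => by
    have : e v = ∞ := by
      change OnePoint.inversionFun (((v - v : E) : OnePoint E)) = ∞
      simp [OnePoint.inversionFun]
    rw [← this, e.injective.eq_iff]
  have he : e ∞ = (0 : E) := rfl
  have hne : ∀ p : {p : OnePoint E // p ≠ v}, e p ∈ Set.range ((↑) : E → OnePoint E) := fun p => by
    simpa [← OnePoint.ne_infty_iff_exists, hev] using p.2
  let k := OnePoint.isOpenEmbedding_coe (X := E).isEmbedding.toHomeomorph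
  have hk : ∀ q, (k.symm q : OnePoint E) = q := fun q =>
    congrArg Subtype.val (k.apply_symm_apply q)
  refine ⟨(e.symm : C(_, _)).comp ((OnePoint.translation E).comp
    ((ContinuousMap.id E).prodMap (e : C(_, _)))),
    ⟨fun p => k.symm ⟨e p, hne p⟩, by fun_prop⟩, fun p => ?_, fun w w' p => ?_, fun p => ?_,
    fun h => ?_⟩
  · have : OnePoint.map (fun x : E => x) = id := OnePoint.map_id
    simp [OnePoint.translation, this]
  · simp [OnePoint.translation, add_assoc]
    generalize e p = q
    induction q using OnePoint.rec <;> simp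
  · simp [OnePoint.translation, he]
    rw [hk, e.symm_apply_apply]
  · apply OnePoint.coe_injective
    simp [hk, he]

end OnePointNormed

section MappingSpaces

variable {K L Z : Type*} [TopologicalSpace K] [TopologicalSpace L] [TopologicalSpace Z]

theorem ContinuousMap.isInducing_precomp {q : C(K, L)} (hq : IsProperMap q)
    (hs : Function.Surjective q) : IsInducing (fun f : C(L, Z) => f.comp q) := by
  refine ⟨le_antisymm (ContinuousMap.continuous_precomp q).le_induced ?_⟩
  rw [ContinuousMap.compactOpen_eq (X := L)]
  refine le_generateFrom ?_
  rintro _ ⟨A, hA, U, hU, rfl⟩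
  refine ⟨_, ContinuousMap.isOpen_setOfPred_mapsTo (hq.isCompact_preimage hA) hU, ?_⟩
  ext f
  refine ⟨fun h x hx => ?_, fun h x hx => h hx⟩
  obtain ⟨y, rfl⟩ := hs x
  exact h hx

/-- An embedding restricts to a homeomorphism onto a subspace equal to its range. -/
def Topology.IsEmbedding.homeomorphSubtype {p : L → Prop} {f : K → L} (hf : IsEmbedding f)
    (h : range f = {y | p y}) : K ≃ₜ {y // p y} :=
  hf.toHomeomorph.trans (Homeomorph.setCongr h)

section Collapse

variable {Y : Type*} [TopologicalSpace Y]

theorem OnePoint.continuous_extend_coe [T2Space K] {e : Y → K} (he : IsOpenEmbedding e) :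
    Continuous (Function.extend e ((↑) : Y → OnePoint Y) fun _ => ∞) := by
  refine continuous_iff_continuousAt.2 fun x => ?_
  by_cases hx : x ∈ range e
  · obtain ⟨y, rfl⟩ := hx
    refine he.continuousAt_iff.1 ?_
    rw [Function.extend_comp he.injective]
    exact OnePoint.continuous_coe.continuousAt
  · rw [ContinuousAt, Function.extend_apply' _ _ _ hx]
    refine OnePoint.hasBasis_nhds_infty.tendsto_right_iff.2 fun s hs => ?_
    have hmem : (e '' s)ᶜ ∈ 𝓝 x :=
      (hs.2.image he.continuous).isClosed.isOpen_compl.mem_nhds fun h =>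
        hx (image_subset_range _ _ h)
    filter_upwards [hmem] with z hz
    by_cases hze : z ∈ range e
    · obtain ⟨y, rfl⟩ := hze
      rw [he.injective.extend_apply]
      exact Or.inl ⟨y, fun h => hz ⟨y, h, rfl⟩, rfl⟩
    · rw [Function.extend_apply' _ _ _ hze]
      exact Or.inr rfl

/-- Based maps out of the one-point compactification of an open subspace `Y` of `K` are maps out
of `K` which are constant off `Y`. -/
def OnePoint.basedMapsHomeomorph [CompactSpace K] [T2Space K] [T2Space Y]
    [WeaklyLocallyCompactSpace Y] {e : Y → K} (he : IsOpenEmbedding e) {P : Set K}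
    (hP : (range e)ᶜ = P) (hne : P.Nonempty) (z : Z) :
    {f : C(OnePoint Y, Z) // f ∞ = z} ≃ₜ {f : C(K, Z) // ∀ x ∈ P, f x = z} := by
  let q : C(K, OnePoint Y) :=
    ⟨Function.extend e ((↑) : Y → OnePoint Y) fun _ => ∞, OnePoint.continuous_extend_coe he⟩
  have hqe : ∀ y, q (e y) = y :=
    he.injective.extend_apply ((↑) : Y → OnePoint Y) fun _ => ∞
  have hqP : ∀ x ∈ P, q x = ∞ := fun x hx =>
    Function.extend_apply' ((↑) : Y → OnePoint Y) (fun _ => ∞) x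
      (by rw [← hP] at hx; exact hx)
  have hs : Function.Surjective q := by
    intro p
    induction p using OnePoint.rec with
    | infty => exact hne.imp hqP
    | coe y => exact ⟨e y, hqe y⟩
  have hq : IsProperMap q := q.continuous.isProperMap
  have hqq : IsQuotientMap q := hq.isClosedMap.isQuotientMap q.continuous hs
  have hemb : IsEmbedding (fun f : C(OnePoint Y, Z) => f.comp q) :=
    ⟨ContinuousMap.isInducing_precomp hq hs, fun f g h => by
      ext x
      obtain ⟨y, rfl⟩ := hs x
      exact DFunLike.congr_fun h y⟩
  refine (hemb.comp IsEmbedding.subtypeVal).homeomorphSubtype ?_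
  ext f
  refine ⟨?_, fun hf => ?_⟩
  · rintro ⟨g, rfl⟩ x hx
    simpa [hqP x hx] using g.2
  · let g : OnePoint Y → Z := fun p => p.elim z (f ∘ e)
    have hg : g ∘ q = f := by
      funext x
      by_cases hx : x ∈ P
      · simpa [g, hqP x hx] using (hf x hx).symm
      · rw [← hP, notMem_compl_iff] at hx
        obtain ⟨y, rfl⟩ := hx
        simp [g, hqe]
    exact ⟨⟨⟨g, hqq.continuous_iff.2 (hg ▸ f.continuous)⟩, rfl⟩,
      ContinuousMap.ext fun x => congrFun hg x⟩

end Collapse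

/-- If every `G`-orbit of `L` meets the image of `q : K → L`, equivariant maps out of `L` are the
maps out of `K` which are compatible with the identifications induced by `G`. -/
def equivariantMapsHomeomorph {G X : Type*} [Group G] [Finite G] [TopologicalSpace G]
    [DiscreteTopology G] [TopologicalSpace X] [CompactSpace K] [T2Space K]
    [T2Space L]
    (a : G → L → L) (a' : G → X → X) (ha : ∀ g, Continuous (a g)) (ha' : ∀ g, Continuous (a' g))
    (ha1 : ∀ l, a 1 l = l) (ha1' : ∀ x, a' 1 x = x)
    (ham : ∀ g h l, a (g * h) l = a g (a h l)) (ham' : ∀ g h x, a' (g * h) x = a' g (a' h x))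
    (q : C(K, L)) (hq : ∀ l, ∃ g x, a g (q x) = l) {k₀ : K} {l₀ : L}
    (hk : q k₀ = l₀) (x₀ : X) {p : C(K, X) → Prop}
    (hp : ∀ f, p f ↔ f k₀ = x₀ ∧ ∀ g x y, a g (q x) = q y → a' g (f x) = f y) :
    {f : C(L, X) // f l₀ = x₀ ∧ ∀ g l, f (a g l) = a' g (f l)} ≃ₜ {f : C(K, X) // p f} := by
  subst hk
  let Q : C(G × K, L) := ⟨fun z => a z.1 (q z.2),
    continuous_prod_of_discrete_left.2 fun g => (ha g).comp q.continuous⟩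
  have hQs : Function.Surjective Q := fun l => by
    obtain ⟨g, x, h⟩ := hq l
    exact ⟨(g, x), h⟩
  have hQ : IsProperMap Q := Q.continuous.isProperMap
  have hQq : IsQuotientMap Q := hQ.isClosedMap.isQuotientMap Q.continuous hQs
  let W : C(K, X) → C(G × K, X) := fun f => ⟨fun z => a' z.1 (f z.2),
    continuous_prod_of_discrete_left.2 fun g => (ha' g).comp f.continuous⟩
  have hW : Continuous W := by
    refine ContinuousMap.continuous_of_continuous_uncurry _ ?_
    change Continuous fun z : C(K, X) × (G × K) => a' z.2.1 (z.1 z.2.2)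
    have : Continuous fun z : G × (C(K, X) × K) => a' z.1 (z.2.1 z.2.2) :=
      continuous_prod_of_discrete_left.2 fun g => (ha' g).comp (by fun_prop)
    exact this.comp (f := fun z : C(K, X) × (G × K) => (z.2.1, (z.1, z.2.2))) (by fun_prop)
  let R : {f : C(L, X) // f (q k₀) = x₀ ∧ ∀ g l, f (a g l) = a' g (f l)} → C(K, X) :=
    fun f => f.1.comp q
  have hWR : W ∘ R = (fun f : C(L, X) => f.comp Q) ∘ Subtype.val := by
    funext f
    ext z
    exact (f.2.2 z.1 (q z.2)).symm
  have hR : Continuous R := (ContinuousMap.continuous_precomp q).comp continuous_subtype_val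
  have hRi : IsInducing R := by
    refine IsInducing.of_comp hR hW ?_
    rw [hWR]
    exact (ContinuousMap.isInducing_precomp hQ hQs).comp IsInducing.subtypeVal
  have hinj : Function.Injective R := fun f f' h => by
    ext l
    obtain ⟨g, x, rfl⟩ := hq l
    rw [f.2.2, f'.2.2]
    exact congrArg (a' g) (DFunLike.congr_fun h x)
  refine IsEmbedding.homeomorphSubtype ⟨hRi, hinj⟩ ?_
  ext f
  rw [mem_ofPred_eq, hp]
  refine ⟨?_, fun hf => ?_⟩
  · rintro ⟨f, rfl⟩
    refine ⟨f.2.1, fun g x y h => ?_⟩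
    simp only [R, ContinuousMap.comp_apply]
    rw [← f.2.2, h]
  · have hlift : ∀ z z', Q z = Q z' → W f z = W f z' := by
      rintro ⟨g, x⟩ ⟨g', x'⟩ h
      have h1 : a (g'⁻¹ * g) (q x) = q x' := by
        change a g (q x) = a g' (q x') at h
        rw [ham, h, ← ham, inv_mul_cancel, ha1]
      have h2 := hf.2 _ _ _ h1
      change a' g (f x) = a' g' (f x')
      rw [← h2, ← ham', mul_inv_cancel_left]
    let F : C(L, X) := hQq.lift (W f) hlift
    have hF : ∀ g x, F (a g (q x)) = a' g (f x) := fun g x =>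
      DFunLike.congr_fun (hQq.lift_comp (W f) hlift) (g, x)
    have hFq : ∀ x, F (q x) = f x := fun x => by
      simpa only [ha1, ha1'] using hF 1 x
    refine ⟨⟨F, by rw [hFq, hf.1], fun g l => ?_⟩, ContinuousMap.ext hFq⟩
    obtain ⟨h, x, rfl⟩ := hq l
    rw [← ham, hF, hF, ham']

end MappingSpaces

section Squares

variable {B S X F E : Type*} [TopologicalSpace B] [TopologicalSpace S] [TopologicalSpace X]
  [NormedAddCommGroup F] [NormedSpace ℝ F] [NormedAddCommGroup E] [NormedSpace ℝ E]

/-- Pairs of paths ending at `s₀` with a common starting point in `B`. -/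
abbrev PathPairs (i : B → S) (s₀ : S) : Type _ :=
  {p : B × C(I, S) × C(I, S) //
      (p.2.1 0 = i p.1 ∧ p.2.1 1 = s₀) ∧ p.2.2 0 = i p.1 ∧ p.2.2 1 = s₀}

/-- Loops at `s₀`. -/
abbrev UnitLoops (s₀ : S) : Type _ := {f : C(I, S) // ∀ x ∈ ({0, 1} : Set I), f x = s₀}

/-- Paths ending at `s₀` whose starting point runs through a subspace over which `s₀` can be moved
by a family of translations `T` of `S` are the same as pairs of a starting point and a loop. -/
def pathsHomeomorph (T : C(F × S, S)) (hT0 : ∀ s, T (0, s) = s)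
    (hT : ∀ w w' s, T (w, T (w', s)) = T (w + w', s)) (s₀ : S) (i : C(B, S)) (c : C(B, F))
    (hc : ∀ b, T (c b, s₀) = i b) :
    PathPairs i s₀ ≃ₜ
    UnitLoops s₀ × UnitLoops s₀ × B := by
  let U : ℝ → B → C(I, S) → C(I, S) := fun ε b f =>
    ⟨fun r => T ((ε * (1 - r : ℝ)) • c b, f r), by fun_prop⟩
  have hU : ∀ ε, Continuous fun p : B × C(I, S) => U ε p.1 p.2 := fun ε => by
    refine ContinuousMap.continuous_of_continuous_uncurry _ ?_
    change Continuous fun z : (B × C(I, S)) × I => T ((ε * (1 - z.2 : ℝ)) • c z.1.1, z.1.2 z.2)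
    fun_prop
  have hUU : ∀ ε b f, U (-ε) b (U ε b f) = f := fun ε b f => by
    ext r
    change T (_, T (_, f r)) = f r
    rw [hT, ← add_smul, neg_mul, neg_add_cancel, zero_smul, hT0]
  have hU1 : ∀ ε b f, U ε b f 1 = f 1 := fun ε b f => by
    change T (_, _) = _
    simp [hT0]
  have hU0 : ∀ ε b f, U ε b f 0 = T (ε • c b, f 0) := fun ε b f => by
    change T (_, _) = _
    simp
  have hneg : ∀ b, T ((-1 : ℝ) • c b, i b) = s₀ := fun b => by
    rw [← hc, hT, neg_one_smul, neg_add_cancel, hT0]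
  exact
  { toFun := fun p => (⟨U (-1) p.1.1 p.1.2.1, by
        rintro x (rfl | rfl)
        · rw [hU0, p.2.1.1, hneg]
        · rw [hU1, p.2.1.2]⟩, ⟨U (-1) p.1.1 p.1.2.2, by
        rintro x (rfl | rfl)
        · rw [hU0, p.2.2.1, hneg]
        · rw [hU1, p.2.2.2]⟩, p.1.1)
    invFun := fun p => ⟨(p.2.2, U 1 p.2.2 p.1.1, U 1 p.2.2 p.2.1.1), by
      refine ⟨⟨?_, ?_⟩, ?_, ?_⟩
      · rw [hU0, p.1.2 0 (by simp), one_smul, hc]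
      · rw [hU1, p.1.2 1 (by simp)]
      · rw [hU0, p.2.1.2 0 (by simp), one_smul, hc]
      · rw [hU1, p.2.1.2 1 (by simp)]⟩
    left_inv := fun p => by
      refine Subtype.ext (Prod.ext rfl (Prod.ext ?_ ?_))
      · simpa using hUU (-1) p.1.1 p.1.2.1
      · simpa using hUU (-1) p.1.1 p.1.2.2
    right_inv := fun p => by
      refine Prod.ext (Subtype.ext (hUU 1 _ _)) (Prod.ext (Subtype.ext (hUU 1 _ _)) rfl)
    continuous_toFun := by
      refine Continuous.prodMk (Continuous.subtype_mk ?_ _)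
        (Continuous.prodMk (Continuous.subtype_mk ?_ _) (by fun_prop))
      · exact (hU (-1)).comp (f := fun p : PathPairs i s₀ => (p.1.1, p.1.2.1)) (by fun_prop)
      · exact (hU (-1)).comp (f := fun p : PathPairs i s₀ => (p.1.1, p.1.2.2)) (by fun_prop)
    continuous_invFun := by
      refine Continuous.subtype_mk (Continuous.prodMk (by fun_prop) (Continuous.prodMk ?_ ?_)) _
      · exact (hU 1).comp (f := fun p : UnitLoops s₀ × UnitLoops s₀ × B => (p.2.2, p.1.1))
          (by fun_prop)
      · exact (hU 1).comp (f := fun p : UnitLoops s₀ × UnitLoops s₀ × B => (p.2.2, p.2.1.1))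
          (by fun_prop) }

/-- The boundary of the unit square. -/
abbrev squareBoundary : Set (I × I) := {x | x.1 = 0 ∨ x.1 = 1 ∨ x.2 = 0 ∨ x.2 = 1}

/-- Squares in `X` with boundary sent to `x₀`. -/
abbrev UnitSquares (x₀ : X) : Type _ := {f : C(I × I, X) // ∀ x ∈ squareBoundary, f x = x₀}

/-- The squares in `X` whose left edge is constant at a point of `B`, whose right edge is constant
at `x₀`, and whose lower and upper edges are in the images of `j₁` and `j₂`. -/
abbrev IsSectorMap (i : B → S) (j₁ j₂ : S → X) (x₀ : X) (f : C(I × I, X)) : Prop :=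
  (∃ b, ∀ s, f (0, s) = j₁ (i b)) ∧ (∀ s, f (1, s) = x₀) ∧
    ∀ r, f (r, 0) ∈ range j₁ ∧ f (r, 1) ∈ range j₂

/-- The space of squares satisfying `IsSectorMap`. -/
abbrev SectorMaps (i : B → S) (j₁ j₂ : S → X) (x₀ : X) : Type _ :=
  {f : C(I × I, X) // IsSectorMap i j₁ j₂ x₀ f}

/-- A family of translations of `X` which moves `x₀` to all points in the images of `j₁` and `j₂`
splits a square in `X` into its edges and a square with trivial boundary. -/
def sectorMapsHomeomorph (T : C(E × X, X)) (hT0 : ∀ x, T (0, x) = x)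
    (hT : ∀ w w' x, T (w, T (w', x)) = T (w + w', x)) (s₀ : S) (x₀ : X) (i : C(B, S))
    (j₁ j₂ : C(S, X)) (hi : IsEmbedding i) (hj₁ : IsEmbedding j₁) (hj₂ : IsEmbedding j₂)
    (hji : ∀ b, j₁ (i b) = j₂ (i b)) (hj₁0 : j₁ s₀ = x₀) (hj₂0 : j₂ s₀ = x₀)
    (c₁ c₂ : C(S, E)) (hc₁ : ∀ s, T (c₁ s, x₀) = j₁ s) (hc₂ : ∀ s, T (c₂ s, x₀) = j₂ s)
    (hc₁0 : c₁ s₀ = 0) (hc₂0 : c₂ s₀ = 0) (hci : ∀ b, c₁ (i b) = c₂ (i b)) :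
    SectorMaps i j₁ j₂ x₀ ≃ₜ
    PathPairs i s₀ ×
    UnitSquares x₀ := by
  let U : ℝ → C(I, S) × C(I, S) → C(I × I, X) → C(I × I, X) := fun ε p f =>
    ⟨fun z => T (ε • ((1 - z.2 : ℝ) • c₁ (p.1 z.1) + (z.2 : ℝ) • c₂ (p.2 z.1)), f z), by fun_prop⟩
  have hU : ∀ ε, Continuous fun p : (C(I, S) × C(I, S)) × C(I × I, X) => U ε p.1 p.2 := fun ε => by
    refine ContinuousMap.continuous_of_continuous_uncurry _ ?_
    change Continuous fun z : ((C(I, S) × C(I, S)) × C(I × I, X)) × (I × I) =>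
      T (ε • ((1 - z.2.2 : ℝ) • c₁ (z.1.1.1 z.2.1) + (z.2.2 : ℝ) • c₂ (z.1.1.2 z.2.1)), z.1.2 z.2)
    fun_prop
  have hUU : ∀ ε p f, U (-ε) p (U ε p f) = f := fun ε p f => by
    ext z
    change T (_, T (_, f z)) = f z
    rw [hT, ← add_smul, neg_add_cancel, zero_smul, hT0]
  have hUa : ∀ ε p f z, U ε p f z =
      T (ε • ((1 - z.2 : ℝ) • c₁ (p.1 z.1) + (z.2 : ℝ) • c₂ (p.2 z.1)), f z) :=
    fun _ _ _ _ => rfl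
  have hn₁ : ∀ s, T (-c₁ s, j₁ s) = x₀ := fun s => by rw [← hc₁, hT, neg_add_cancel, hT0]
  have hn₂ : ∀ s, T (-c₂ s, j₂ s) = x₀ := fun s => by rw [← hc₂, hT, neg_add_cancel, hT0]
  have hk : IsEmbedding (j₁ ∘ i) := hj₁.comp hi
  have hb : ∀ f : SectorMaps i j₁ j₂ x₀, f.1 (0, 0) ∈ range (j₁ ∘ i) := fun f => by
    obtain ⟨b, h⟩ := f.2.1
    exact ⟨b, (h 0).symm⟩
  let b : C(SectorMaps i j₁ j₂ x₀, B) :=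
    ⟨fun f => hk.toHomeomorph.symm ⟨f.1 (0, 0), hb f⟩, by fun_prop⟩
  let α : C(SectorMaps i j₁ j₂ x₀, C(I, S)) := ContinuousMap.curry
    ⟨fun z => hj₁.toHomeomorph.symm ⟨z.1.1 (z.2, 0), (z.1.2.2.2 z.2).1⟩, by fun_prop⟩
  let β : C(SectorMaps i j₁ j₂ x₀, C(I, S)) := ContinuousMap.curry
    ⟨fun z => hj₂.toHomeomorph.symm ⟨z.1.1 (z.2, 1), (z.1.2.2.2 z.2).2⟩, by fun_prop⟩
  have hbf : ∀ f, j₁ (i (b f)) = f.1 (0, 0) := fun f =>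
    congrArg Subtype.val (hk.toHomeomorph.apply_symm_apply ⟨f.1 (0, 0), hb f⟩)
  have hα : ∀ f r, j₁ (α f r) = f.1 (r, 0) := fun f r =>
    congrArg Subtype.val (hj₁.toHomeomorph.apply_symm_apply ⟨f.1 (r, 0), (f.2.2.2 r).1⟩)
  have hβ : ∀ f r, j₂ (β f r) = f.1 (r, 1) := fun f r =>
    congrArg Subtype.val (hj₂.toHomeomorph.apply_symm_apply ⟨f.1 (r, 1), (f.2.2.2 r).2⟩)
  have hbs : ∀ f s, f.1 (0, s) = j₁ (i (b f)) := fun f s => by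
    obtain ⟨b', h⟩ := f.2.1
    rw [hbf, h, h]
  have hα0 : ∀ f, α f 0 = i (b f) := fun f => hj₁.injective (by rw [hα, hbs])
  have hβ0 : ∀ f, β f 0 = i (b f) := fun f => hj₂.injective (by rw [hβ, hbs, hji])
  have hα1 : ∀ f, α f 1 = s₀ := fun f => hj₁.injective (by rw [hα, f.2.2.1, hj₁0])
  have hβ1 : ∀ f, β f 1 = s₀ := fun f => hj₂.injective (by rw [hβ, f.2.2.1, hj₂0])
  have hG0 : ∀ (p : PathPairs i s₀ × UnitSquares x₀) s, U 1 p.1.1.2 p.2.1 (0, s) = j₁ (i p.1.1.1) :=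
      fun p s => by
    rw [hUa, p.2.2 (0, s) (by simp), p.1.2.1.1, p.1.2.2.1, ← hci, ← add_smul]
    simp [hc₁]
  have hG1 : ∀ (p : PathPairs i s₀ × UnitSquares x₀) s, U 1 p.1.1.2 p.2.1 (1, s) = x₀ :=
      fun p s => by
    rw [hUa, p.2.2 (1, s) (by simp), p.1.2.1.2, p.1.2.2.2, hc₁0, hc₂0]
    simp [hT0]
  have hGα : ∀ (p : PathPairs i s₀ × UnitSquares x₀) r, U 1 p.1.1.2 p.2.1 (r, 0) = j₁ (p.1.1.2.1 r) :=
      fun p r => by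
    rw [hUa, p.2.2 (r, 0) (by simp)]
    simp [hc₁]
  have hGβ : ∀ (p : PathPairs i s₀ × UnitSquares x₀) r, U 1 p.1.1.2 p.2.1 (r, 1) = j₂ (p.1.1.2.2 r) :=
      fun p r => by
    rw [hUa, p.2.2 (r, 1) (by simp)]
    simp [hc₂]
  let G : PathPairs i s₀ × UnitSquares x₀ → SectorMaps i j₁ j₂ x₀ := fun p => ⟨U 1 p.1.1.2 p.2.1,
    ⟨p.1.1.1, hG0 p⟩, hG1 p, fun r => ⟨⟨_, (hGα p r).symm⟩, ⟨_, (hGβ p r).symm⟩⟩⟩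
  have hGb : ∀ p, b (G p) = p.1.1.1 := fun p =>
    hk.injective ((hbf _).trans (hG0 p 0))
  have hGa : ∀ p, α (G p) = p.1.1.2.1 := fun p =>
    ContinuousMap.ext fun r => hj₁.injective ((hα _ r).trans (hGα p r))
  have hGb' : ∀ p, β (G p) = p.1.1.2.2 := fun p =>
    ContinuousMap.ext fun r => hj₂.injective ((hβ _ r).trans (hGβ p r))
  exact
  { toFun := fun f => (⟨(b f, α f, β f), ⟨hα0 f, hα1 f⟩, hβ0 f, hβ1 f⟩,
      ⟨U (-1) (α f, β f) f.1, by
        rintro ⟨r, s⟩ (h | h | h | h) <;> dsimp only at h <;> subst h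
        · rw [hUa]
          dsimp only
          rw [hα0, hβ0, hbs, ← hci, ← add_smul, sub_add_cancel, one_smul, neg_one_smul, hn₁]
        · rw [hUa]
          dsimp only
          rw [hα1, hβ1, hc₁0, hc₂0, f.2.2.1]
          simp [hT0]
        · rw [hUa, ← hα]
          simp [hn₁]
        · rw [hUa, ← hβ]
          simp [hn₂]⟩)
    invFun := G
    left_inv := fun f => Subtype.ext (by
      change U 1 (α f, β f) (U (-1) (α f, β f) f.1) = f.1
      simpa using hUU (-1) (α f, β f) f.1)
    right_inv := fun p => by
      refine Prod.ext (Subtype.ext (Prod.ext (hGb p) (Prod.ext (hGa p) (hGb' p))))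
        (Subtype.ext ?_)
      change U (-1) (α (G p), β (G p)) (U 1 p.1.1.2 p.2.1) = p.2.1
      rw [hGa, hGb']
      exact hUU 1 _ _
    continuous_toFun := by
      refine Continuous.prodMk (Continuous.subtype_mk (by fun_prop) _)
        (Continuous.subtype_mk ?_ _)
      exact (hU (-1)).comp (f := fun f : SectorMaps i j₁ j₂ x₀ => ((α f, β f), f.1)) (by fun_prop)
    continuous_invFun :=
      Continuous.subtype_mk ((hU 1).comp
        (f := fun p : PathPairs i s₀ × UnitSquares x₀ => (p.1.1.2, p.2.1))
        (by fun_prop)) _ }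

end Squares

section OnePointMap

theorem OnePoint.continuous_map_of_norm_eq_s3 {E : Type*} [NormedAddCommGroup E] [ProperSpace E]
    {f : E → E} (hf : Continuous f) (hn : ∀ x, ‖f x‖ = ‖x‖) : Continuous (OnePoint.map f) := by
  refine OnePoint.continuous_map hf ?_
  rw [coclosedCompact_eq_cocompact, ← Metric.cobounded_eq_cocompact,
    ← tendsto_norm_atTop_iff_cobounded]
  simpa only [hn] using tendsto_norm_cobounded_atTop

theorem OnePoint.isEmbedding_map {V W : Type*} [TopologicalSpace V] [TopologicalSpace W]
    [T2Space V] [T2Space W] [WeaklyLocallyCompactSpace W]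
    {f : V → W} (hf : IsClosedEmbedding f) : IsEmbedding (OnePoint.map f) := by
  have hc : Continuous (OnePoint.map f) := by
    refine OnePoint.continuous_map hf.continuous ?_
    rw [coclosedCompact_eq_cocompact, coclosedCompact_eq_cocompact]
    exact hf.tendsto_cocompact
  exact (hc.isClosedEmbedding (Option.map_injective hf.injective)).isEmbedding

end OnePointMap

section DihedralAction

open DihedralGroup ComplexConjugate

/-- The point `exp (iπt/m)` of the unit circle. -/
def cisPi (m : ℕ) (t : ℝ) : ℂ := Complex.exp ((Real.pi * t / m : ℝ) * Complex.I)

theorem continuous_cisPi (m : ℕ) : Continuous (cisPi m) := by unfold cisPi; fun_prop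

theorem norm_cisPi (m : ℕ) (t : ℝ) : ‖cisPi m t‖ = 1 := Complex.norm_exp_ofReal_mul_I _

theorem cisPi_zero (m : ℕ) : cisPi m 0 = 1 := by simp [cisPi]

theorem cisPi_add (m : ℕ) (s t : ℝ) : cisPi m (s + t) = cisPi m s * cisPi m t := by
  rw [cisPi, cisPi, cisPi, ← Complex.exp_add]
  congr 1
  push_cast
  ring

theorem conj_cisPi (m : ℕ) (t : ℝ) : conj (cisPi m t) = cisPi m (-t) := by
  rw [cisPi, cisPi, ← Complex.exp_conj]
  congr 1
  simp [neg_div]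

variable {m : ℕ} [NeZero m]

theorem cisPi_eq_cisPi_iff {s t : ℝ} : cisPi m s = cisPi m t ↔ ∃ j : ℤ, s = t + 2 * m * j := by
  have hm : (m : ℝ) ≠ 0 := NeZero.ne _
  rw [cisPi, cisPi, Complex.exp_eq_exp_iff_exists_int]
  refine exists_congr fun j => ?_
  rw [show (j : ℂ) * (2 * Real.pi * Complex.I) = ((j * (2 * Real.pi) : ℝ) : ℂ) * Complex.I by
    push_cast; ring, ← add_mul, mul_left_inj' Complex.I_ne_zero, ← Complex.ofReal_add,
    Complex.ofReal_inj]
  have := Real.pi_ne_zero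
  field_simp

theorem cisPi_two_mul_intCast (k : ℤ) : cisPi m (2 * k) = ZMod.toCircle (k : ZMod m) := by
  rw [ZMod.toCircle_intCast, cisPi]
  congr 1
  push_cast
  ring

theorem dihedralAct_r_apply (k : ZMod m) (z : ℂ) :
    dihedralAct m (r k) z = ZMod.toCircle k * z := by
  rw [ZMod.toCircle_apply]; rfl

theorem dihedralAct_sr_apply (k : ZMod m) (z : ℂ) :
    dihedralAct m (sr k) z = conj (ZMod.toCircle k * z) := by
  rw [ZMod.toCircle_apply]; rfl

theorem dihedralAct_one (z : ℂ) : dihedralAct m 1 z = z := by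
  rw [DihedralGroup.one_def, dihedralAct_r_apply]
  simp

theorem dihedralAct_mul (g h : DihedralGroup m) (z : ℂ) :
    dihedralAct m (g * h) z = dihedralAct m g (dihedralAct m h z) := by
  rcases g with k | k <;> rcases h with l | l <;>
    simp only [r_mul_r, r_mul_sr, sr_mul_r, sr_mul_sr, dihedralAct_r_apply, dihedralAct_sr_apply,
      AddChar.map_add_eq_mul, AddChar.map_sub_eq_div, Circle.coe_mul, div_eq_mul_inv,
      Circle.coe_inv_eq_conj, map_mul, Complex.conj_conj] <;> ring

theorem continuous_dihedralAct (g : DihedralGroup m) : Continuous (dihedralAct m g) := by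
  rcases g with k | k
  · exact (continuous_const_mul _).congr fun z => (dihedralAct_r_apply k z).symm
  · exact (Complex.continuous_conj.comp (continuous_const_mul _)).congr
      fun z => (dihedralAct_sr_apply k z).symm

theorem norm_dihedralAct (g : DihedralGroup m) (z : ℂ) : ‖dihedralAct m g z‖ = ‖z‖ := by
  rcases g with k | k
  · rw [dihedralAct_r_apply, norm_mul, Circle.norm_coe, one_mul]
  · rw [dihedralAct_sr_apply, Complex.norm_conj, norm_mul, Circle.norm_coe, one_mul]

theorem dihedralAct_smul (g : DihedralGroup m) (t : ℝ) (z : ℂ) :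
    dihedralAct m g (t • z) = t • dihedralAct m g z := by
  rcases g with k | k
  · simp [dihedralAct_r_apply]; ring
  · simp [dihedralAct_sr_apply]; ring

theorem dihedralAct_r_cisPi (k : ℤ) (t : ℝ) :
    dihedralAct m (r k) (cisPi m t) = cisPi m (2 * k + t) := by
  rw [dihedralAct_r_apply, cisPi_add, cisPi_two_mul_intCast]

theorem dihedralAct_sr_cisPi (k : ℤ) (t : ℝ) :
    dihedralAct m (sr k) (cisPi m t) = cisPi m (-(2 * k + t)) := by
  rw [dihedralAct_sr_apply, ← conj_cisPi, cisPi_add, cisPi_two_mul_intCast]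

theorem exists_dihedralAct_cisPi_eq (t : ℝ) :
    ∃ (g : DihedralGroup m) (s : I), dihedralAct m g (cisPi m (-s)) = cisPi m t := by
  have h0 := Int.le_ceil t
  have h1 := Int.ceil_lt_add_one t
  rcases Int.even_or_odd' ⌈t⌉ with ⟨k, hk | hk⟩
  · refine ⟨r (k : ℤ), ⟨⌈t⌉ - t, by linarith, by linarith⟩, ?_⟩
    have hk' : (⌈t⌉ : ℝ) = 2 * k := mod_cast hk
    rw [dihedralAct_r_cisPi]
    congr 1
    dsimp only
    linarith
  · refine ⟨sr ((-k : ℤ) : ZMod m), ⟨1 - (⌈t⌉ - t), by linarith, by linarith⟩, ?_⟩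
    have hk' : (⌈t⌉ : ℝ) = 2 * k + 1 := mod_cast hk
    rw [dihedralAct_sr_cisPi]
    congr 1
    push_cast
    linarith

theorem dihedralAct_cisPi_eq_cisPi {g : DihedralGroup m} {s s' : I}
    (h : dihedralAct m g (cisPi m (-s)) = cisPi m (-s')) :
    s = s' ∧ (g = 1 ∨ g = sr 0 ∧ s = 0 ∨ g = sr 1 ∧ s = 1) := by
  obtain ⟨s, hs0, hs1⟩ := s
  obtain ⟨t, ht0, ht1⟩ := s'
  rcases g with k | k <;> obtain ⟨k, rfl⟩ := ZMod.intCast_surjective k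
  · rw [dihedralAct_r_cisPi, cisPi_eq_cisPi_iff] at h
    obtain ⟨j, hj⟩ := h
    dsimp only at hj
    have hN : s - t = 2 * ((k - m * j : ℤ) : ℝ) := by push_cast; linarith
    have h1 : ((k - m * j : ℤ) : ℝ) < 1 := by linarith
    have h2 : (-1 : ℝ) < ((k - m * j : ℤ) : ℝ) := by linarith
    have h3 : k - m * j = 0 := by
      have h1' : k - m * j < 1 := by exact_mod_cast h1
      have h2' : -1 < k - m * j := by exact_mod_cast h2
      omega
    rw [h3] at hN
    refine ⟨Subtype.ext (by push_cast at hN; linarith), Or.inl ?_⟩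
    rw [DihedralGroup.one_def, sub_eq_zero.1 h3]
    simp
  · rw [dihedralAct_sr_cisPi, cisPi_eq_cisPi_iff] at h
    obtain ⟨j, hj⟩ := h
    dsimp only at hj
    have hN : s + t = 2 * ((k + m * j : ℤ) : ℝ) := by push_cast; linarith
    have h1 : ((k + m * j : ℤ) : ℝ) < 2 := by linarith
    have h2 : (-1 : ℝ) < ((k + m * j : ℤ) : ℝ) := by linarith
    have h3 : k + m * j = 0 ∨ k + m * j = 1 := by
      have h1' : k + m * j < 2 := by exact_mod_cast h1
      have h2' : -1 < k + m * j := by exact_mod_cast h2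
      omega
    rcases h3 with h3 | h3
    · rw [h3] at hN
      push_cast at hN
      refine ⟨Subtype.ext (by dsimp only; linarith), Or.inr (Or.inl ⟨?_, Subtype.ext ?_⟩)⟩
      · rw [eq_neg_of_add_eq_zero_left h3]
        simp
      · change s = 0
        linarith
    · rw [h3] at hN
      push_cast at hN
      refine ⟨Subtype.ext (by dsimp only; linarith), Or.inr (Or.inr ⟨?_, Subtype.ext ?_⟩)⟩
      · rw [eq_sub_of_add_eq h3]
        simp
      · change s = 1
        linarith

theorem dihedralAct_sr_eq_self_iff {k : ZMod m} {w : ℂ} (hw : ‖w‖ = 1)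
    (hk : dihedralAct m (sr k) w = w) (z : ℂ) :
    dihedralAct m (sr k) z = z ↔ ∃ t : ℝ, t • w = z := by
  refine ⟨fun hz => ?_, ?_⟩
  · rw [dihedralAct_sr_apply] at hz hk
    have hww : w * conj w = 1 := by simp [Complex.mul_conj, Complex.normSq_eq_norm_sq, hw]
    have hreal : conj (z * conj w) = z * conj w := by
      have hz' := congrArg conj hz
      have hk' := congrArg conj hk
      rw [Complex.conj_conj] at hz' hk'
      rw [map_mul, Complex.conj_conj, ← hz', ← hk']
      ring
    obtain ⟨t, ht⟩ := Complex.conj_eq_iff_real.1 hreal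
    refine ⟨t, ?_⟩
    rw [Complex.real_smul, ← ht, mul_assoc, mul_comm (conj w), hww, mul_one]
  · rintro ⟨t, rfl⟩
    rw [dihedralAct_smul, hk]

end DihedralAction

section BasedSphereMaps

theorem isOpenEmbedding_sigmoid : IsOpenEmbedding unitInterval.sigmoid :=
  ⟨Topology.isEmbedding_sigmoid, by rw [unitInterval.range_sigmoid]; exact isOpen_Ioo⟩

theorem unitInterval.mem_range_sigmoid {x : I} :
    x ∈ range unitInterval.sigmoid ↔ x ≠ 0 ∧ x ≠ 1 := by
  rw [unitInterval.range_sigmoid, mem_Ioo, unitInterval.pos_iff_ne_zero,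
    unitInterval.lt_one_iff_ne_one]

/-- Based maps out of the one-point compactification of the line are loops. -/
def basedMapsUnitLoops {Z : Type*} [TopologicalSpace Z] (z : Z) :
    {f : C(OnePoint (EuclideanSpace ℝ (Fin 1)), Z) // f ∞ = z} ≃ₜ UnitLoops z :=
  let e := (EuclideanSpace.equiv (Fin 1) ℝ).toHomeomorph.trans (Homeomorph.funUnique (Fin 1) ℝ)
  OnePoint.basedMapsHomeomorph (isOpenEmbedding_sigmoid.comp e.isOpenEmbedding) (by
    rw [EquivLike.range_comp]
    ext x
    rw [mem_compl_iff, unitInterval.mem_range_sigmoid, mem_insert_iff, mem_singleton_iff]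
    tauto) (insert_nonempty _ _) z

/-- Based maps out of the one-point compactification of the plane are squares with constant
boundary. -/
def basedMapsUnitSquares {Z : Type*} [TopologicalSpace Z] (z : Z) :
    {f : C(OnePoint (EuclideanSpace ℝ (Fin 2)), Z) // f ∞ = z} ≃ₜ UnitSquares z :=
  let e := (EuclideanSpace.equiv (Fin 2) ℝ).toHomeomorph.trans Homeomorph.finTwoArrow
  OnePoint.basedMapsHomeomorph
    ((isOpenEmbedding_sigmoid.prodMap isOpenEmbedding_sigmoid).comp e.isOpenEmbedding) (by
    rw [EquivLike.range_comp, range_prodMap]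
    ext x
    rw [mem_compl_iff, mem_prod, unitInterval.mem_range_sigmoid, unitInterval.mem_range_sigmoid,
      mem_ofPred_eq]
    tauto) ⟨0, Or.inl rfl⟩ z

/-- A homeomorphism of targets induces a homeomorphism of spaces of based maps. -/
def basedMapsCongr {A Y Z : Type*} [TopologicalSpace A] [TopologicalSpace Y] [TopologicalSpace Z]
    (e : Y ≃ₜ Z) (a : A) (y : Y) (z : Z) (h : e y = z) :
    {f : C(A, Y) // f a = y} ≃ₜ {f : C(A, Z) // f a = z} :=
  Homeomorph.subtype ((Homeomorph.refl A).arrowCongr e) fun f => by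
    subst h
    exact e.injective.eq_iff.symm

end BasedSphereMaps

section SectorPoints

open DihedralGroup

variable {m : ℕ}

/-- Polar coordinates on a sector of angle `π/m` in the one-point compactification of the plane. -/
def sectorPoint (m : ℕ) : C(I × I, OnePoint ℂ) where
  toFun x := if (1 - x.1 : ℝ) = 0 then ∞ else
    ((1 - x.1 : ℝ)⁻¹ • (x.1 : ℝ) • cisPi m (-x.2) : ℂ)
  continuous_toFun := by
    have := continuous_cisPi m
    refine OnePoint.continuous_inv_smul (by fun_prop) (by fun_prop) fun x hx h => ?_
    have hn := congrArg norm h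
    rw [norm_smul, norm_cisPi, ← sub_eq_zero.1 hx] at hn
    simp at hn

theorem sectorPoint_one (s : I) : sectorPoint m (1, s) = ∞ := if_pos (by simp)

theorem sectorPoint_of_ne {x : I × I} (h : x.1 ≠ 1) :
    sectorPoint m x = (((1 - x.1 : ℝ)⁻¹ * x.1) • cisPi m (-x.2) : ℂ) := by
  rw [mul_smul]
  exact if_neg fun h' => h (Subtype.ext (sub_eq_zero.1 h').symm)

theorem sectorPoint_zero (s : I) : sectorPoint m (0, s) = ((0 : ℂ) : OnePoint ℂ) := by
  rw [sectorPoint_of_ne zero_ne_one]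
  simp

theorem exists_map_sectorPoint_eq [NeZero m] (z : OnePoint ℂ) :
    ∃ (g : DihedralGroup m) (x : I × I), OnePoint.map (dihedralAct m g) (sectorPoint m x) = z := by
  induction z using OnePoint.rec with
  | infty => exact ⟨1, (1, 0), by rw [sectorPoint_one, OnePoint.map_infty]⟩
  | coe z =>
    have hm : (m : ℝ) ≠ 0 := NeZero.ne _
    obtain ⟨g, s, h⟩ := exists_dihedralAct_cisPi_eq (m := m) (m * z.arg / Real.pi)
    have hz := norm_nonneg z
    refine ⟨g, (⟨‖z‖ / (1 + ‖z‖), by positivity, div_le_one_of_le₀ (by linarith) (by linarith)⟩,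
      s), ?_⟩
    have h1 : (1 + ‖z‖) ≠ 0 := by positivity
    have h2 : 1 - ‖z‖ / (1 + ‖z‖) = (1 + ‖z‖)⁻¹ := by field_simp; ring
    rw [sectorPoint_of_ne, OnePoint.map_some, dihedralAct_smul]
    · dsimp only
      rw [h, h2, inv_inv, mul_div_cancel₀ _ h1, cisPi, Complex.real_smul,
        show Real.pi * (m * z.arg / Real.pi) / m = z.arg by field_simp,
        Complex.norm_mul_exp_arg_mul_I]
    · intro h3
      have h4 : ‖z‖ / (1 + ‖z‖) = 1 := congrArg Subtype.val h3
      rw [h4, sub_self] at h2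
      exact inv_ne_zero h1 h2.symm

theorem map_sectorPoint_eq_sectorPoint [NeZero m] {g : DihedralGroup m} {x y : I × I}
    (h : OnePoint.map (dihedralAct m g) (sectorPoint m x) = sectorPoint m y) :
    x.1 = y.1 ∧ (x.1 = 0 ∨ x.1 = 1 ∨
      x.2 = y.2 ∧ (g = 1 ∨ g = sr 0 ∧ x.2 = 0 ∨ g = sr 1 ∧ x.2 = 1)) := by
  obtain ⟨r, s⟩ := x
  obtain ⟨r', s'⟩ := y
  dsimp only
  by_cases hr : r = 1
  · subst hr
    by_cases hr' : r' = 1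
    · exact ⟨hr'.symm, Or.inr (Or.inl rfl)⟩
    · rw [sectorPoint_one, sectorPoint_of_ne hr', OnePoint.map_infty] at h
      exact (OnePoint.infty_ne_coe _ h).elim
  by_cases hr' : r' = 1
  · subst hr'
    rw [sectorPoint_one, sectorPoint_of_ne hr, OnePoint.map_some] at h
    exact (OnePoint.coe_ne_infty _ h).elim
  rw [sectorPoint_of_ne hr, sectorPoint_of_ne hr', OnePoint.map_some, OnePoint.coe_eq_coe,
    dihedralAct_smul] at h
  dsimp only at h
  have hlt : (0 : ℝ) < 1 - r := sub_pos.2 (unitInterval.lt_one_iff_ne_one.2 hr)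
  have hlt' : (0 : ℝ) < 1 - r' := sub_pos.2 (unitInterval.lt_one_iff_ne_one.2 hr')
  have hn := congrArg norm h
  rw [norm_smul, norm_smul, norm_dihedralAct, norm_cisPi, norm_cisPi, mul_one, mul_one,
    Real.norm_of_nonneg (mul_nonneg (inv_nonneg.2 hlt.le) r.2.1),
    Real.norm_of_nonneg (mul_nonneg (inv_nonneg.2 hlt'.le) r'.2.1)] at hn
  have hrr : r = r' := by
    apply Subtype.ext
    have hn' := hn
    field_simp at hn'
    linarith
  subst hrr
  refine ⟨rfl, or_iff_not_imp_left.2 fun hr0 => Or.inr ?_⟩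
  have hr0' : (r : ℝ) ≠ 0 := fun h => hr0 (Subtype.ext h)
  exact dihedralAct_cisPi_eq_cisPi
    (smul_right_injective ℂ (mul_ne_zero (inv_ne_zero hlt.ne') hr0') h)

theorem map_sectorPoint_eq_self [NeZero m] {g : DihedralGroup m} {s : I}
    (h : dihedralAct m g (cisPi m (-s)) = cisPi m (-s)) (r : I) :
    OnePoint.map (dihedralAct m g) (sectorPoint m (r, s)) = sectorPoint m (r, s) := by
  by_cases hr : r = 1
  · rw [hr, sectorPoint_one, OnePoint.map_infty]
  · rw [sectorPoint_of_ne hr, OnePoint.map_some, dihedralAct_smul, h]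

theorem dihedralAct_sr_zero_one [NeZero m] : dihedralAct m (sr 0) 1 = 1 := by
  simpa [cisPi_zero] using dihedralAct_sr_cisPi (m := m) 0 0

theorem dihedralAct_sr_one_cisPi [NeZero m] :
    dihedralAct m (sr 1) (cisPi m (-1)) = cisPi m (-1) := by
  have := dihedralAct_sr_cisPi (m := m) 1 (-1)
  norm_num at this
  exact this

theorem im_cisPi_neg_one_ne_zero (hm : 2 ≤ m) : (cisPi m (-1)).im ≠ 0 := by
  have hm' : (2 : ℝ) ≤ m := mod_cast hm
  rw [cisPi, Complex.exp_ofReal_mul_I_im, mul_neg_one, neg_div, Real.sin_neg]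
  refine neg_ne_zero.2 (Real.sin_pos_of_pos_of_lt_pi ?_ ?_).ne'
  · have := Real.pi_pos
    positivity
  · exact div_lt_self Real.pi_pos (by linarith)

end SectorPoints

section FixedSpheres

open DihedralGroup

/-- The linear inclusion of the plane spanned by `(w, 0)` and `(0, 1)` into `ℂ × ℝ`. -/
def planeInclusion (w : ℂ) : EuclideanSpace ℝ (Fin 2) →ₗ[ℝ] ℂ × ℝ :=
  ((LinearMap.toSpanSingleton ℝ ℂ w).comp (EuclideanSpace.proj 0).toLinearMap).prod
    (EuclideanSpace.proj 1).toLinearMap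

theorem planeInclusion_apply (w : ℂ) (x : EuclideanSpace ℝ (Fin 2)) :
    planeInclusion w x = (x 0 • w, x 1) := rfl

theorem isClosedEmbedding_planeInclusion {w : ℂ} (hw : w ≠ 0) :
    IsClosedEmbedding (planeInclusion w) := by
  refine LinearMap.isClosedEmbedding_of_injective (LinearMap.ker_eq_bot'.2 fun x hx => ?_)
  rw [planeInclusion_apply, Prod.mk_eq_zero, smul_eq_zero, or_iff_left hw] at hx
  ext k
  fin_cases k
  exacts [hx.1, hx.2]

theorem isEmbedding_map_planeInclusion {w : ℂ} (hw : w ≠ 0) :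
    IsEmbedding (OnePoint.map (planeInclusion w)) :=
  OnePoint.isEmbedding_map (isClosedEmbedding_planeInclusion hw)

theorem coe_mem_range_map_planeInclusion {w : ℂ} {p : ℂ × ℝ} :
    (p : OnePoint (ℂ × ℝ)) ∈ range (OnePoint.map (planeInclusion w)) ↔ ∃ t : ℝ, t • w = p.1 := by
  constructor
  · rintro ⟨x, hx⟩
    induction x using OnePoint.rec with
    | infty => exact (OnePoint.infty_ne_coe _ hx).elim
    | coe x => exact ⟨x 0, congrArg Prod.fst (OnePoint.coe_injective hx)⟩
  · rintro ⟨t, ht⟩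
    exact ⟨(!₂[t, p.2] : EuclideanSpace ℝ (Fin 2)), congrArg OnePoint.some (Prod.ext ht rfl)⟩

/-- The linear inclusion of the second coordinate axis into the plane. -/
def axisInclusion : ℝ →ₗ[ℝ] EuclideanSpace ℝ (Fin 2) :=
  LinearMap.toSpanSingleton ℝ _ !₂[0, 1]

theorem axisInclusion_apply (t : ℝ) : axisInclusion t = !₂[0, t] := by
  ext k
  fin_cases k <;> simp [axisInclusion]

theorem isEmbedding_map_axisInclusion : IsEmbedding (OnePoint.map axisInclusion) := by
  refine OnePoint.isEmbedding_map
    (LinearMap.isClosedEmbedding_of_injective (LinearMap.ker_eq_bot'.2 fun t ht => ?_))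
  rw [axisInclusion_apply] at ht
  simpa using congrArg (fun x : EuclideanSpace ℝ (Fin 2) => x 1) ht

theorem planeInclusion_axisInclusion (w : ℂ) (t : ℝ) :
    planeInclusion w (axisInclusion t) = (0, t) := by
  rw [planeInclusion_apply, axisInclusion_apply]
  simp

theorem map_planeInclusion_map_axisInclusion (w : ℂ) (b : OnePoint ℝ) :
    OnePoint.map (planeInclusion w) (OnePoint.map axisInclusion b) =
      OnePoint.map (fun t => ((0 : ℂ), t)) b := by
  induction b using OnePoint.rec with
  | infty => rfl
  | coe t => exact congrArg OnePoint.some (planeInclusion_axisInclusion w t)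

theorem mem_range_of_mem_range_map_planeInclusion {w : ℂ} (hw : w.im ≠ 0) {p : OnePoint (ℂ × ℝ)}
    (h₁ : p ∈ range (OnePoint.map (planeInclusion 1)))
    (h₂ : p ∈ range (OnePoint.map (planeInclusion w))) :
    ∃ b, p = OnePoint.map (planeInclusion 1) (OnePoint.map axisInclusion b) := by
  simp_rw [map_planeInclusion_map_axisInclusion]
  induction p using OnePoint.rec with
  | infty => exact ⟨∞, rfl⟩
  | coe p =>
    obtain ⟨s, hs⟩ := coe_mem_range_map_planeInclusion.1 h₁
    obtain ⟨t, ht⟩ := coe_mem_range_map_planeInclusion.1 h₂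
    have him : t * w.im = 0 := by
      rw [← smul_eq_mul, ← Complex.smul_im, ht, ← hs]
      simp
    rw [(mul_eq_zero.1 him).resolve_right hw, zero_smul] at ht
    exact ⟨p.2, congrArg OnePoint.some (Prod.ext ht.symm rfl)⟩

variable {m : ℕ}

/-- The action of the dihedral group on the one-point compactification of `ℂ × ℝ`. -/
def dihedralActProd (g : DihedralGroup m) : OnePoint (ℂ × ℝ) → OnePoint (ℂ × ℝ) :=
  OnePoint.map fun p => (dihedralAct m g p.1, p.2)

theorem dihedralActProd_coe (g : DihedralGroup m) (p : ℂ × ℝ) :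
    dihedralActProd g p = ((dihedralAct m g p.1, p.2) : ℂ × ℝ) := rfl

variable [NeZero m]

theorem continuous_dihedralActProd (g : DihedralGroup m) : Continuous (dihedralActProd g) :=
  OnePoint.continuous_map_of_norm_eq_s3
    (((continuous_dihedralAct g).comp continuous_fst).prodMk continuous_snd) fun p => by
      rw [Prod.norm_def, Prod.norm_def, norm_dihedralAct]

theorem dihedralActProd_one (p : OnePoint (ℂ × ℝ)) :
    dihedralActProd (1 : DihedralGroup m) p = p := by
  induction p using OnePoint.rec with
  | infty => rfl
  | coe p => rw [dihedralActProd_coe, dihedralAct_one]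

theorem dihedralActProd_mul (g h : DihedralGroup m) (p : OnePoint (ℂ × ℝ)) :
    dihedralActProd (g * h) p = dihedralActProd g (dihedralActProd h p) := by
  induction p using OnePoint.rec with
  | infty => rfl
  | coe p => simp_rw [dihedralActProd_coe, dihedralAct_mul]

theorem dihedralActProd_map_axis (g : DihedralGroup m) (b : OnePoint ℝ) :
    dihedralActProd g (OnePoint.map (fun t => ((0 : ℂ), t)) b) =
      OnePoint.map (fun t => ((0 : ℂ), t)) b := by
  induction b using OnePoint.rec with
  | infty => rfl
  | coe t =>
    rw [OnePoint.map_some, dihedralActProd_coe]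
    have := dihedralAct_smul g 0 0
    rw [zero_smul, zero_smul] at this
    rw [this]

theorem dihedralActProd_sr_eq_self_iff {k : ZMod m} {w : ℂ} (hw : ‖w‖ = 1)
    (hk : dihedralAct m (sr k) w = w) (p : OnePoint (ℂ × ℝ)) :
    dihedralActProd (sr k) p = p ↔ p ∈ range (OnePoint.map (planeInclusion w)) := by
  induction p using OnePoint.rec with
  | infty => exact ⟨fun _ => ⟨∞, rfl⟩, fun _ => rfl⟩
  | coe p =>
    rw [coe_mem_range_map_planeInclusion, ← dihedralAct_sr_eq_self_iff hw hk, dihedralActProd_coe,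
      OnePoint.coe_eq_coe, Prod.ext_iff]
    exact and_iff_left rfl

theorem isSectorMap_iff (hm : 2 ≤ m) (f : C(I × I, OnePoint (ℂ × ℝ))) :
    IsSectorMap (OnePoint.map axisInclusion) (OnePoint.map (planeInclusion 1))
      (OnePoint.map (planeInclusion (cisPi m (-1)))) ∞ f ↔
    f (1, 0) = ∞ ∧ ∀ (g : DihedralGroup m) x y,
      OnePoint.map (dihedralAct m g) (sectorPoint m x) = sectorPoint m y →
        dihedralActProd g (f x) = f y := by
  have h₁ := dihedralActProd_sr_eq_self_iff norm_one (dihedralAct_sr_zero_one (m := m))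
  have h₂ := dihedralActProd_sr_eq_self_iff (norm_cisPi m (-1)) dihedralAct_sr_one_cisPi
  constructor
  · rintro ⟨⟨b, h0⟩, h1, hr⟩
    refine ⟨h1 0, ?_⟩
    rintro g ⟨r, s⟩ ⟨r', s'⟩ h
    obtain ⟨hrr, h'⟩ := map_sectorPoint_eq_sectorPoint h
    clear h
    dsimp only at hrr h'
    subst hrr
    rcases h' with rfl | rfl | ⟨rfl, hg⟩
    · rw [h0, h0, map_planeInclusion_map_axisInclusion, dihedralActProd_map_axis]
    · rw [h1, h1]
      rfl
    · rcases hg with rfl | ⟨rfl, rfl⟩ | ⟨rfl, rfl⟩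
      exacts [dihedralActProd_one _, (h₁ _).2 (hr r).1, (h₂ _).2 (hr r).2]
  · rintro ⟨h1, hf⟩
    have hconst : ∀ x y, sectorPoint m x = sectorPoint m y → f x = f y := fun x y h => by
      rw [← hf 1 x y, dihedralActProd_one]
      rw [← h]
      induction sectorPoint m x using OnePoint.rec with
      | infty => rfl
      | coe z => rw [OnePoint.map_some, dihedralAct_one]
    have hr : ∀ r, f (r, 0) ∈ range (OnePoint.map (planeInclusion 1)) ∧
        f (r, 1) ∈ range (OnePoint.map (planeInclusion (cisPi m (-1)))) := fun r =>
      ⟨(h₁ _).1 (hf _ _ _ (map_sectorPoint_eq_self (by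
          simpa [cisPi_zero] using dihedralAct_sr_zero_one) r)),
        (h₂ _).1 (hf _ _ _ (map_sectorPoint_eq_self (by
          simpa using dihedralAct_sr_one_cisPi) r))⟩
    have h0 : ∀ s, f (0, s) = f (0, 0) := fun s =>
      hconst _ _ (by rw [sectorPoint_zero, sectorPoint_zero])
    refine ⟨?_, fun s => ?_, hr⟩
    · obtain ⟨b, hb⟩ := mem_range_of_mem_range_map_planeInclusion (im_cisPi_neg_one_ne_zero hm)
        (hr 0).1 (h0 1 ▸ (hr 0).2)
      exact ⟨b, fun s => (h0 s).trans hb⟩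
    · rw [← h1]
      exact hconst _ _ (by rw [sectorPoint_one, sectorPoint_one])

end FixedSpheres

section Assembly

variable {m : ℕ} [NeZero m]

theorem nonempty_pathPairs_homeomorph :
    Nonempty (PathPairs (OnePoint.map axisInclusion) ∞ ≃ₜ
      UnitLoops (∞ : OnePoint (EuclideanSpace ℝ (Fin 2))) ×
        UnitLoops (∞ : OnePoint (EuclideanSpace ℝ (Fin 2))) × OnePoint ℝ) := by
  obtain ⟨T, c, hT0, hT, hc, -⟩ :=
    OnePoint.exists_translation_fixing (!₂[1, 0] : EuclideanSpace ℝ (Fin 2))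
  have hv : ∀ b, OnePoint.map axisInclusion b ≠ (!₂[1, 0] : EuclideanSpace ℝ (Fin 2)) :=
      fun b h => by
    induction b using OnePoint.rec with
    | infty => exact OnePoint.infty_ne_coe _ h
    | coe t =>
      rw [OnePoint.map_some, OnePoint.coe_eq_coe, axisInclusion_apply] at h
      simpa using congrArg (fun x : EuclideanSpace ℝ (Fin 2) => x 0) h
  have hi := isEmbedding_map_axisInclusion.continuous
  exact ⟨pathsHomeomorph T hT0 hT ∞ ⟨_, hi⟩ ⟨fun b => c ⟨_, hv b⟩, by fun_prop⟩ fun b => hc _⟩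

theorem nonempty_sectorMaps_homeomorph {w : ℂ} (hw : w.im ≠ 0) :
    Nonempty (SectorMaps (OnePoint.map axisInclusion) (OnePoint.map (planeInclusion 1))
        (OnePoint.map (planeInclusion w)) (∞ : OnePoint (ℂ × ℝ)) ≃ₜ
      PathPairs (OnePoint.map axisInclusion) ∞ × UnitSquares (∞ : OnePoint (ℂ × ℝ))) := by
  have hw0 : w ≠ 0 := fun h => hw (by simp [h])
  obtain ⟨T, c, hT0, hT, hc, hc0⟩ := OnePoint.exists_translation_fixing ((1 + w, 0) : ℂ × ℝ)
  have hv₁ : ∀ s, OnePoint.map (planeInclusion 1) s ≠ ((1 + w, 0) : ℂ × ℝ) := fun s h => by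
    obtain ⟨t, ht⟩ := coe_mem_range_map_planeInclusion.1 ⟨s, h⟩
    have := congrArg Complex.im ht
    simp at this
    exact hw this.symm
  have hv₂ : ∀ s, OnePoint.map (planeInclusion w) s ≠ ((1 + w, 0) : ℂ × ℝ) := fun s h => by
    obtain ⟨t, ht⟩ := coe_mem_range_map_planeInclusion.1 ⟨s, h⟩
    have him := congrArg Complex.im ht
    simp only [Complex.smul_im, smul_eq_mul, Complex.add_im, Complex.one_im, zero_add] at him
    rw [mul_left_eq_self₀.1 him |>.resolve_right hw, one_smul] at ht
    simp at ht
  have hi := isEmbedding_map_axisInclusion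
  have hj₁ := isEmbedding_map_planeInclusion one_ne_zero
  have hj₂ := isEmbedding_map_planeInclusion hw0
  have hj₁' := hj₁.continuous
  have hj₂' := hj₂.continuous
  have hji : ∀ b, OnePoint.map (planeInclusion 1) (OnePoint.map axisInclusion b) =
      OnePoint.map (planeInclusion w) (OnePoint.map axisInclusion b) := fun b => by
    rw [map_planeInclusion_map_axisInclusion, map_planeInclusion_map_axisInclusion]
  exact ⟨sectorMapsHomeomorph T hT0 hT ∞ ∞ ⟨_, hi.continuous⟩ ⟨_, hj₁'⟩ ⟨_, hj₂'⟩ hi hj₁ hj₂ hji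
    rfl rfl ⟨fun s => c ⟨_, hv₁ s⟩, by fun_prop⟩ ⟨fun s => c ⟨_, hv₂ s⟩, by fun_prop⟩
    (fun s => hc _) (fun s => hc _) (hc0 _) (hc0 _) fun b => congrArg c (Subtype.ext (hji b))⟩

/-- Equivariant based maps are determined by their restriction to a fundamental sector. -/
def equivariantMapsSectorMaps (hm : 2 ≤ m) :
    {f : C(OnePoint ℂ, OnePoint (ℂ × ℝ)) // f ∞ = ∞ ∧ ∀ (g : DihedralGroup m) x,
        f (OnePoint.map (dihedralAct m g) x) = dihedralActProd g (f x)} ≃ₜ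
      SectorMaps (OnePoint.map axisInclusion) (OnePoint.map (planeInclusion 1))
        (OnePoint.map (planeInclusion (cisPi m (-1)))) (∞ : OnePoint (ℂ × ℝ)) :=
  letI : TopologicalSpace (DihedralGroup m) := ⊥
  haveI : DiscreteTopology (DihedralGroup m) := ⟨rfl⟩
  equivariantMapsHomeomorph (fun g => OnePoint.map (dihedralAct m g)) dihedralActProd
    (fun g => OnePoint.continuous_map_of_norm_eq_s3 (continuous_dihedralAct g) (norm_dihedralAct g))
    continuous_dihedralActProd
    (fun z => by
      induction z using OnePoint.rec with
      | infty => rfl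
      | coe z => rw [OnePoint.map_some, dihedralAct_one])
    dihedralActProd_one
    (fun g h z => by
      induction z using OnePoint.rec with
      | infty => rfl
      | coe z => simp_rw [OnePoint.map_some, dihedralAct_mul])
    dihedralActProd_mul (sectorPoint m) exists_map_sectorPoint_eq (sectorPoint_one 0) ∞
    (isSectorMap_iff hm)

theorem nonempty_unitSquares_homeomorph :
    Nonempty (UnitSquares (∞ : OnePoint (ℂ × ℝ)) ≃ₜ BasedSphereMaps 2 3) := by
  have e : (ℂ × ℝ) ≃L[ℝ] EuclideanSpace ℝ (Fin 3) := ContinuousLinearEquiv.ofFinrankEq (by simp)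
  exact ⟨(basedMapsUnitSquares _).symm.trans
    (basedMapsCongr e.toHomeomorph.onePointCongr ∞ ∞ ∞ rfl)⟩

end Assembly

theorem equivariant_maps_dihedral_htpyEquiv (n : ℕ) (hn : 2 ≤ n) :
    Nonempty (ContinuousMap.HomotopyEquiv
      {f : C(OnePoint ℂ, OnePoint (ℂ × ℝ)) //
        f OnePoint.infty = OnePoint.infty ∧
        ∀ (g : DihedralGroup (2 ^ (n - 1))) (x : OnePoint ℂ),
          f (OnePoint.map (dihedralAct (2 ^ (n - 1)) g) x) =
            OnePoint.map (fun p => (dihedralAct (2 ^ (n - 1)) g p.1, p.2)) (f x)}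
      (BasedSphereMaps 1 2 × BasedSphereMaps 1 2 × OnePoint ℝ ×
        BasedSphereMaps 2 3)) := by
  have hm : 2 ≤ 2 ^ (n - 1) := Nat.le_self_pow (by omega) 2
  obtain ⟨e₁⟩ := nonempty_sectorMaps_homeomorph (im_cisPi_neg_one_ne_zero hm)
  obtain ⟨e₂⟩ := nonempty_pathPairs_homeomorph
  obtain ⟨e₃⟩ := nonempty_unitSquares_homeomorph
  let l := (basedMapsUnitLoops (∞ : OnePoint (EuclideanSpace ℝ (Fin 2)))).symm
  let e := (equivariantMapsSectorMaps hm).trans (e₁.trans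
    (((e₂.trans (l.prodCongr (l.prodCongr (Homeomorph.refl _)))).prodCongr e₃).trans
      ((Homeomorph.prodAssoc _ _ _).trans
        ((Homeomorph.refl _).prodCongr (Homeomorph.prodAssoc _ _ _)))))
  exact ⟨e.toHomotopyEquiv⟩

end
end
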